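/- arXiv:2303.06166 — 3 statements merged into one kernel-verified Lean document; each statement's English description precedes it below -/
import Mathlib

section
/- Let M' → M be an injective homomorphism of finitely presented torsion O_K-modules, and suppose given isomorphisms M ≅ ⊕_{j=1}^{m} O_K/a_jO_K and M' ≅ ⊕_{j=1}^{m'} O_K/b_jO_K for some m, m' ∈ ℕ and nonzero elements a_1, …, a_m, b_1, …, b_{m'} ∈ O_K with v(a_1) ≥ … ≥ v(a_m) and v(b_1) ≥ … ≥ v(b_{m'}). Then v(b_j) ≤ v(a_j) for all 1 ≤ j ≤ min{m, m'}, and if m' > m then v(b_j) = 0 (i.e. b_j is a unit of O_K) for all m < j ≤ m'. -/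
/-!
STATEMENT 3 (Lemma 4.7): if `M' → M` is an injective homomorphism of finitely presented torsion
`O_K`-modules, with `M ≅ ⊕_{j=1}^m O_K/a_j` and `M' ≅ ⊕_{j=1}^{m'} O_K/b_j` (valuations in
decreasing order), then `v(b_j) ≤ v(a_j)` for `j ≤ min{m, m'}`, and `v(b_j) = 0` for `m < j ≤ m'`.
-/

theorem aux_key {K : Type*} [Field K] (A : ValuationSubring K)
    {m m' : ℕ} (a : Fin m → A) (b : Fin m' → A)
    (f : ((j : Fin m') → A ⧸ Ideal.span {b j}) →ₗ[A] ((j : Fin m) → A ⧸ Ideal.span {a j}))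
    (hf : Function.Injective f) (n : ℕ) (hn : n < m') (c : A)
    (hc : ∀ k : Fin m, n ≤ (k : ℕ) → a k ∣ c) :
    ∃ i : Fin m', (i : ℕ) ≤ n ∧ b i ∣ c := by
  classical
  let ι : Fin (n+1) → Fin m' := fun i => ⟨i, by omega⟩
  have hι : Function.Injective ι := fun i j h => by
    simpa [ι, Fin.ext_iff] using h
  let e : Fin (n+1) → ((j : Fin m') → A ⧸ Ideal.span {b j}) := fun i => Pi.single (ι i) 1
  choose L hL using fun (i : Fin (n+1)) (k : Fin m) =>
    Ideal.Quotient.mk_surjective (I := Ideal.span {a k}) (f (e i) k)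
  let u : Fin (n+1) → Fin n → A := fun i k => if h : (k : ℕ) < m then L i ⟨k, h⟩ else 0
  have hni : ¬ Function.Injective (Fintype.linearCombination A u) := fun h => by
    have := le_of_fin_injective A _ h
    omega
  rw [← LinearMap.ker_eq_bot, Submodule.eq_bot_iff] at hni
  push Not at hni
  obtain ⟨s, hs, hs0⟩ := hni
  rw [LinearMap.mem_ker, Fintype.linearCombination_apply] at hs
  obtain ⟨i0, hi0⟩ := Finite.exists_max (fun i => A.valuation (s i : K))
  have hsi0 : (s i0 : K) ≠ 0 := by
    intro h
    apply hs0
    funext i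
    have := hi0 i
    simp only [h, map_zero, le_zero_iff, map_eq_zero] at this
    exact Subtype.ext this
  have hdiv : ∀ i, ∃ t : A, s i = s i0 * t := fun i => by
    refine ⟨⟨(s i : K) / s i0, ?_⟩, ?_⟩
    · rw [← A.valuation_le_one_iff, map_div₀]
      exact div_le_one_of_le₀ (hi0 i) zero_le
    · apply Subtype.ext
      simp only [MulMemClass.coe_mul]
      field_simp
  choose t ht using hdiv
  have hsA : s i0 ≠ 0 := fun h => hsi0 (by rw [h]; rfl)
  have ht0 : t i0 = 1 := by
    have := ht i0
    exact (mul_left_cancel₀ hsA (by rw [mul_one]; exact this)).symm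
  have hrel : ∀ k : Fin n, ∑ i, t i * u i k = 0 := fun k => by
    have := congrFun hs k
    simp only [Finset.sum_apply, Pi.smul_apply, smul_eq_mul, Pi.zero_apply] at this
    apply mul_left_cancel₀ hsA
    rw [mul_zero, ← this, Finset.mul_sum]
    refine Finset.sum_congr rfl fun i _ => ?_
    rw [ht i, mul_assoc]
  have hy : c • (∑ i, t i • e i) = 0 := by
    apply hf
    rw [map_zero]
    funext k
    rw [map_smul, map_sum]
    simp only [map_smul, Pi.smul_apply, Finset.sum_apply, Pi.zero_apply, ← hL]
    have h1 : ∑ i, t i • (Ideal.Quotient.mk (Ideal.span {a k})) (L i k)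
        = Ideal.Quotient.mk (Ideal.span {a k}) (∑ i, t i * L i k) := by
      rw [map_sum]; rfl
    rw [h1]
    change Ideal.Quotient.mk (Ideal.span {a k}) (c * (∑ i, t i * L i k)) = 0
    rw [Ideal.Quotient.eq_zero_iff_mem, Ideal.mem_span_singleton]
    by_cases hk : (k : ℕ) < n
    · have := hrel ⟨k, hk⟩
      simp only [u, k.2, dif_pos, Fin.eta] at this
      rw [this, mul_zero]; exact dvd_zero _
    · exact (hc k (by omega)).mul_right _
  refine ⟨ι i0, by simp only [ι]; omega, ?_⟩
  have h2 := congrFun hy (ι i0)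
  simp only [Pi.smul_apply, Finset.sum_apply, Pi.zero_apply] at h2
  rw [Finset.sum_eq_single i0] at h2
  · simp only [e, Pi.single_eq_same, ht0, one_smul] at h2
    change Ideal.Quotient.mk (Ideal.span {b (ι i0)}) (c * 1) = 0 at h2
    rwa [Ideal.Quotient.eq_zero_iff_mem, Ideal.mem_span_singleton, mul_one] at h2
  · intro i _ hi
    simp only [e]
    rw [Pi.single_eq_of_ne (fun h => hi (hι h).symm), smul_zero]
  · simp

theorem statement3
    -- the complete rank-one valued field `(K, v)` extending `ℚ_p`, with valuation ring `O_K = A`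
    {p : ℕ} [Fact p.Prime] {K : Type*} [Field K] [Algebra ℚ_[p] K]
    (v : K → ℝ)
    (hv_mul : ∀ x y : K, x ≠ 0 → y ≠ 0 → v (x * y) = v x + v y)
    (hv_add : ∀ x y : K, x ≠ 0 → y ≠ 0 → x + y ≠ 0 → min (v x) (v y) ≤ v (x + y))
    (hv_p : v (p : K) = 1)
    (A : ValuationSubring K)
    (hA : ∀ x : K, x ≠ 0 → (x ∈ A ↔ 0 ≤ v x))
    -- an injective homomorphism `M' → M` of (finitely presented, torsion) `O_K`-modules
    {M M' : Type*} [AddCommGroup M] [Module A M] [AddCommGroup M'] [Module A M']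
    (f : M' →ₗ[A] M) (hf : Function.Injective f)
    -- the given presentations, with nonzero elementary divisors of decreasing valuation
    {m m' : ℕ} (a : Fin m → A) (b : Fin m' → A)
    (ha0 : ∀ j, a j ≠ 0) (hb0 : ∀ j, b j ≠ 0)
    (ha : ∀ i j : Fin m, i ≤ j → v (a j : K) ≤ v (a i : K))
    (hb : ∀ i j : Fin m', i ≤ j → v (b j : K) ≤ v (b i : K))
    (eM : M ≃ₗ[A] ((j : Fin m) → A ⧸ Ideal.span {a j}))
    (eM' : M' ≃ₗ[A] ((j : Fin m') → A ⧸ Ideal.span {b j})) :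
    (∀ (j : ℕ) (hm : j < m) (hm' : j < m'),
        v ((b ⟨j, hm'⟩ : A) : K) ≤ v ((a ⟨j, hm⟩ : A) : K)) ∧
      ∀ j : Fin m', m ≤ (j : ℕ) → v ((b j : A) : K) = 0 := by
  have hnn : ∀ x : A, x ≠ 0 → 0 ≤ v (x : K) := fun x hx =>
    (hA x (fun h => hx (Subtype.ext h))).1 x.2
  have hle : ∀ x y : A, y ≠ 0 → x ∣ y → v (x : K) ≤ v (y : K) := by
    rintro x _ hy ⟨z, rfl⟩
    have hx := left_ne_zero_of_mul hy
    have hz := right_ne_zero_of_mul hy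
    have := hv_mul x z (fun h => hx (Subtype.ext h)) (fun h => hz (Subtype.ext h))
    have h3 := hnn z hz
    simp only [MulMemClass.coe_mul]
    linarith
  have hdvd : ∀ x y : A, x ≠ 0 → y ≠ 0 → v (x : K) ≤ v (y : K) → x ∣ y := by
    intro x y hx hy h
    have hx' : (x : K) ≠ 0 := fun h => hx (Subtype.ext h)
    have hy' : (y : K) ≠ 0 := fun h => hy (Subtype.ext h)
    have hq : (y : K) / x ≠ 0 := div_ne_zero hy' hx'
    have h1 := hv_mul x (y / x) hx' hq
    rw [mul_div_cancel₀ _ hx'] at h1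
    exact ⟨⟨(y : K) / x, (hA _ hq).2 (by linarith)⟩, Subtype.ext (by
      simp only [MulMemClass.coe_mul]; field_simp)⟩
  let g := eM.toLinearMap ∘ₗ f ∘ₗ eM'.symm.toLinearMap
  have hg : Function.Injective g := eM.injective.comp (hf.comp eM'.symm.injective)
  constructor
  · intro j hm hm'
    obtain ⟨i, hi, hd⟩ := aux_key A a b g hg j hm' (a ⟨j, hm⟩)
      (fun k hk => hdvd _ _ (ha0 _) (ha0 _) (ha _ _ hk))
    exact (hb i ⟨j, hm'⟩ hi).trans (hle _ _ (ha0 _) hd)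
  · intro j hj
    obtain ⟨i, hi, hd⟩ := aux_key A a b g hg j j.2 1
      (fun k hk => absurd k.2 (by omega))
    have h1 := (hb i j hi).trans (hle _ _ one_ne_zero hd)
    have h2 := hv_mul 1 1 one_ne_zero one_ne_zero
    rw [mul_one] at h2
    have h3 := hnn _ (hb0 j)
    simp only [OneMemClass.coe_one] at h1
    linarith
end

section
/- Let M be a finitely generated free O_K-module equipped with a ℤ_p-algebra homomorphism ι : O_F → End_{O_K}(M), and suppose given an isomorphism M/ι(π)(M) ≅ ⊕_{j=1}^{n} O_K/a_jO_K for some n ∈ ℕ and nonzero elements a_1, …, a_n ∈ O_K with v(a_1) ≥ … ≥ v(a_n). Then: (a) ∑_{j=1}^{n} v(a_j) = (1/e)·rk_{O_K}(M) = (1/e)·∑_τ r_τ; and (b) for every 0 ≤ i ≤ n, ∑_{j=1}^{i} v(a_j) ≤ (1/e)·∑_τ min{i, r_τ}, where both sums over τ run over all ℚ_p-algebra embeddings τ : F → K. -/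
/-!
STATEMENT 6 (Theorem 4.8, module-theoretic form): with `M/ι(π)M ≅ ⊕_{j=1}^n O_K/a_j`
(decreasing valuations), (a) `∑_j v(a_j) = rk(M)/e = (∑_τ r_τ)/e`, and
(b) `∑_{j ≤ i} v(a_j) ≤ (1/e)·∑_τ min{i, r_τ}` for all `0 ≤ i ≤ n`.
-/

open scoped TensorProduct

/-- The eigenspace `M_{K,τ} = {w ∈ M ⊗_{O_K} K | ι(a) w = τ(a) • w for all a ∈ O_F}`. -/
noncomputable def eigenspaceOF {p : ℕ} [Fact p.Prime] {K : Type*} [Field K] [Algebra ℚ_[p] K]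
    (A : ValuationSubring K) {F : Type*} [Field F] [Algebra ℚ_[p] F] (OF : Subring F)
    {M : Type*} [AddCommGroup M] [Module A M] (ι : OF →+* Module.End A M)
    (τ : F →ₐ[ℚ_[p]] K) : Submodule K (K ⊗[A] M) :=
  ⨅ a : OF, LinearMap.ker ((ι a).baseChange K - τ (a : F) • LinearMap.id)


theorem aux_det {A : Type*} [CommRing A] [IsDomain A] {M : Type*} [AddCommGroup M] [Module A M]
    [Module.Free A M] [Module.Finite A M] {J : Type*} [Fintype J] [DecidableEq J]
    (a : J → A) (ha : ∀ j, a j ≠ 0) (f : M →ₗ[A] M)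
    (q : M →ₗ[A] ((j : J) → A ⧸ Ideal.span {a j})) (hq : Function.Surjective q)
    (hqf : ∀ m, q (f m) = 0) :
    ∃ (g : M →ₗ[A] (J → A)) (Ψ : (M × (J → A)) →ₗ[A] (M × (J → A))),
      (∀ m, Ψ (m, 0) = (f m, g m)) ∧
      Associated ((∏ j, a j) * LinearMap.det Ψ) (LinearMap.det f) ∧
      ((∀ m, q m = 0 → ∃ m', f m' = m) → IsUnit (LinearMap.det Ψ)) := by
  let P : (J → A) →ₗ[A] ((j : J) → A ⧸ Ideal.span {a j}) :=
    LinearMap.pi fun j => (Submodule.mkQ (Ideal.span {a j})).comp (LinearMap.proj j)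
  have hPz : ∀ x, P x = 0 ↔ ∀ j, a j ∣ x j := by
    intro x
    simp only [funext_iff, P, LinearMap.pi_apply, LinearMap.comp_apply, LinearMap.proj_apply,
      Pi.zero_apply, Submodule.mkQ_apply, Submodule.Quotient.mk_eq_zero,
      Ideal.mem_span_singleton]
  have hP : Function.Surjective P := by
    intro y
    choose x hx using fun j => Submodule.mkQ_surjective (Ideal.span {a j}) (y j)
    exact ⟨x, funext hx⟩
  obtain ⟨φ, hφ⟩ := Module.projective_lifting_property P q hP
  have hφ' : ∀ m, P (φ m) = q m := fun m => LinearMap.congr_fun hφ m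
  let D : (J → A) →ₗ[A] (J → A) :=
    LinearMap.pi fun j => (LinearMap.mulLeft A (a j)).comp (LinearMap.proj j)
  have hD : ∀ x j, D x j = a j * x j := fun x j => rfl
  have hDinj : ∀ x, D x = 0 → x = 0 := by
    intro x hx
    funext j
    have := congrFun hx j
    rw [hD] at this
    exact (mul_eq_zero.mp this).resolve_left (ha j)
  have hDdet : LinearMap.det D = ∏ j, a j := by
    rw [LinearMap.det_pi]; simp
  have hDr : ∀ x, P x = 0 → ∃ y, D y = x := by
    intro x hx
    choose y hy using (hPz x).1 hx
    exact ⟨y, funext fun j => (hy j).symm⟩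
  have hfr : ∀ m, (φ ∘ₗ f) m ∈ LinearMap.range D := by
    intro m
    exact hDr _ (by rw [LinearMap.comp_apply, hφ', hqf])
  obtain ⟨g, hg⟩ := Module.projective_lifting_property D.rangeRestrict
    ((φ ∘ₗ f).codRestrict _ hfr) D.surjective_rangeRestrict
  have hg' : ∀ m, D (g m) = φ (f m) := fun m => congrArg Subtype.val (LinearMap.congr_fun hg m)
  have hcs : Function.Surjective (φ.coprod D) := by
    intro y
    obtain ⟨m, hm⟩ := hq (P y)
    obtain ⟨x, hx⟩ := hDr (y - φ m) (by rw [map_sub, hφ', hm, sub_self])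
    exact ⟨(m, x), by simp [hx]⟩
  obtain ⟨s, hs⟩ := Module.projective_lifting_property (φ.coprod D) LinearMap.id hcs
  have hs' : ∀ x, φ (s x).1 + D (s x).2 = x := fun x => LinearMap.congr_fun hs x
  let Ψ : (M × (J → A)) →ₗ[A] (M × (J → A)) := (f.prod (-g)).coprod s
  have hΨ : ∀ m x, Ψ (m, x) = (f m + (s x).1, - g m + (s x).2) := fun m x => rfl
  let Sh : (M × (J → A)) ≃ₗ[A] (M × (J → A)) :=
    LinearEquiv.ofLinearMap
      ((LinearMap.fst A M (J → A)).prod (φ.coprod LinearMap.id))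
      ((LinearMap.fst A M (J → A)).prod ((-φ).coprod LinearMap.id))
      (by ext <;> simp) (by ext <;> simp)
  let s1 : (J → A) →ₗ[A] M := (LinearMap.fst A M (J → A)) ∘ₗ s
  let Sh2 : (M × (J → A)) ≃ₗ[A] (M × (J → A)) :=
    LinearEquiv.ofLinearMap
      ((LinearMap.id.coprod s1).prod (LinearMap.snd A M (J → A)))
      ((LinearMap.id.coprod (-s1)).prod (LinearMap.snd A M (J → A)))
      (by ext <;> simp) (by ext <;> simp)
  have key : (Sh : (M × (J → A)) →ₗ[A] (M × (J → A))) ∘ₗ (LinearMap.prodMap LinearMap.id D) ∘ₗ Ψ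
      = (Sh2 : (M × (J → A)) →ₗ[A] (M × (J → A))) ∘ₗ (LinearMap.prodMap f LinearMap.id) := by
    apply LinearMap.ext
    rintro ⟨m, x⟩
    have h1 : φ (f m + (s x).1) + D (- g m + (s x).2) = x := by
      rw [map_add, map_add, map_neg, hg']
      conv_rhs => rw [← hs' x]
      abel
    have : (f m + (s x).1, φ (f m + (s x).1) + D (- g m + (s x).2)) = (f m + (s x).1, x) := by
      rw [h1]
    exact this
  have kd := congrArg LinearMap.det key
  rw [LinearMap.det_comp, LinearMap.det_comp, LinearMap.det_comp, LinearMap.det_prodMap,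
    LinearMap.det_prodMap, hDdet, LinearMap.det_id, LinearMap.det_id, one_mul, mul_one] at kd
  refine ⟨-g, Ψ, fun m => by simp [hΨ], ?_, ?_⟩
  · have e1 := associated_unit_mul_left ((∏ j, a j) * LinearMap.det Ψ) _ Sh.isUnit_det'
    have e2 := associated_unit_mul_left (LinearMap.det f) _ Sh2.isUnit_det'
    rw [kd] at e1
    exact e1.symm.trans e2
  · intro hker
    rw [← LinearMap.isUnit_iff_isUnit_det, Module.End.isUnit_iff]
    apply OrzechProperty.bijective_of_surjective_endomorphism
    rintro ⟨m, x⟩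
    let y := φ m + D x
    have h1 : φ (m - (s y).1) + D (x - (s y).2) = 0 := by
      have := hs' y
      rw [map_sub, map_sub]
      calc _ = y - (φ (s y).1 + D (s y).2) := by simp only [y]; abel
        _ = 0 := by rw [this, sub_self]
    obtain ⟨m', hm'⟩ := hker (m - (s y).1) (by
      rw [← hφ', hPz]
      intro j
      have := congrFun h1 j
      rw [Pi.add_apply, hD, Pi.zero_apply] at this
      rw [eq_neg_of_add_eq_zero_left this]
      exact (dvd_mul_right _ _).neg_right)
    refine ⟨(m', y), ?_⟩
    have h2 : g m' + (x - (s y).2) = 0 := by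
      apply hDinj
      rw [map_add, hg', hm', h1]
    rw [hΨ, hm']
    refine Prod.ext (by simp) ?_
    show -g m' + (s y).2 = x
    rw [← sub_eq_zero]
    calc _ = - (g m' + (x - (s y).2)) := by abel
      _ = 0 := by rw [h2, neg_zero]

theorem aux_free {K : Type*} [Field K] (A : ValuationSubring K) {P : Type*} [AddCommGroup P]
    [Module A P] [Module.Finite A P] (h : ∀ (r : A) (x : P), r ≠ 0 → r • x = 0 → x = 0) :
    Module.Free A P := by
  have : Module.Flat A P := by
    rw [Module.Flat.flat_iff_torsion_eq_bot_of_isBezout, ← Submodule.isTorsionFree_iff_torsion_eq_bot,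
      Module.isTorsionFree_iff_smul_eq_zero]
    intro r x hx
    by_cases hr : r = 0
    · exact Or.inl hr
    · exact Or.inr (h r x hr hx)
  exact Module.free_of_flat_of_isLocalRing

theorem aux_free' {K : Type*} [Field K] (A : ValuationSubring K) {P : Type*} [AddCommGroup P]
    [Module A P] [Module.Finite A P] [Module.Free A P] (N : Submodule A P)
    (h : ∀ (r : A) (x : P), r ≠ 0 → r • x ∈ N → x ∈ N) :
    Module.Free A (P ⧸ N) ∧ Module.Finite A N ∧ Module.Free A N := by
  have h1 : Module.Free A (P ⧸ N) := by
    apply aux_free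
    intro r x
    induction x using Submodule.Quotient.induction_on with
    | _ x =>
      rw [← Submodule.Quotient.mk_smul, Submodule.Quotient.mk_eq_zero,
        Submodule.Quotient.mk_eq_zero]
      exact h r x
  have h2 : Module.Finite A N := by
    obtain ⟨s, hs⟩ := Module.projective_lifting_property N.mkQ LinearMap.id N.mkQ_surjective
    have hs' : ∀ x, N.mkQ (s x) = x := fun x => LinearMap.congr_fun hs x
    let r : P →ₗ[A] N := (LinearMap.id - s ∘ₗ N.mkQ).codRestrict N (by
      intro x
      rw [← Submodule.Quotient.mk_eq_zero, ← Submodule.mkQ_apply]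
      simp only [LinearMap.sub_apply, LinearMap.id_apply, LinearMap.comp_apply, map_sub, hs',
        sub_self])
    apply Module.Finite.of_surjective r
    intro x
    refine ⟨x, Subtype.ext ?_⟩
    have : N.mkQ (x : P) = 0 := by simp
    show (x : P) - s (N.mkQ (x : P)) = x
    rw [this, map_zero, sub_zero]
  refine ⟨h1, h2, aux_free A ?_⟩
  intro r x hr hx
  have : (r • (x : P)) = 0 := congrArg Subtype.val hx
  have ht : Module.IsTorsionFree A P := inferInstance
  rw [Module.isTorsionFree_iff_smul_eq_zero] at ht
  exact Subtype.ext ((ht _ _ this).resolve_left hr)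

theorem aux_rank {K : Type*} [Field K] (A : ValuationSubring K) {M : Type*} [AddCommGroup M]
    [Module A M] [Module.Finite A M] [Module.Free A M] (W : Submodule K (K ⊗[A] M))
    (N : Submodule A M) (hN : ∀ m, m ∈ N ↔ (1 : K) ⊗ₜ[A] m ∈ W) :
    Module.finrank K W ≤ Module.finrank A N ∧ ∀ (r : A) (x : M), r ≠ 0 → r • x ∈ N → x ∈ N := by
  have hs : ∀ (r : A) (x : M), r ≠ 0 → r • x ∈ N → x ∈ N := by
    intro r x hr hx
    rw [hN] at hx ⊢
    rw [TensorProduct.tmul_smul, ← algebraMap_smul K r] at hx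
    exact (W.smul_mem_iff (by simpa using hr)).1 hx
  refine ⟨?_, hs⟩
  obtain ⟨h1, h2, h3⟩ := aux_free' A N hs
  have e1 := Submodule.finrank_quotient_add_finrank N
  have e2 := Submodule.finrank_quotient_add_finrank W
  rw [Module.finrank_baseChange] at e2
  let T : (M ⧸ N) →ₗ[A] ((K ⊗[A] M) ⧸ W) :=
    N.liftQ ((W.mkQ.restrictScalars A) ∘ₗ (TensorProduct.mk A K M 1)) (by
      intro m hm
      simpa using (hN m).1 hm)
  have hT : LinearMap.ker T = ⊥ := by
    rw [LinearMap.ker_eq_bot']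
    intro x
    induction x using Submodule.Quotient.induction_on with
    | _ x =>
      intro hx
      have : (Submodule.Quotient.mk ((1 : K) ⊗ₜ[A] x) : (K ⊗[A] M) ⧸ W) = 0 := hx
      rw [Submodule.Quotient.mk_eq_zero] at this ⊢
      exact (hN x).2 this
  have b := Module.Free.chooseBasis A (M ⧸ N)
  have hl := b.linearIndependent.map' T hT
  rw [LinearIndependent.iff_fractionRing (R := A) (K := K)] at hl
  have := hl.fintype_card_le_finrank
  rw [← Module.finrank_eq_card_chooseBasisIndex] at this
  omega

theorem aux_v_pow {K : Type*} [Field K] (v : K → ℝ)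
    (hv_mul : ∀ x y : K, x ≠ 0 → y ≠ 0 → v (x * y) = v x + v y) (x : K) (hx : x ≠ 0) (n : ℕ) :
    v (x ^ n) = n * v x := by
  have h1 : v 1 = 0 := by
    have := hv_mul 1 1 one_ne_zero one_ne_zero
    rw [one_mul] at this
    linarith
  induction n with
  | zero => simp [h1]
  | succ n ih =>
    rw [pow_succ, hv_mul _ _ (pow_ne_zero _ hx) hx, ih]
    push_cast
    ring

theorem aux_v_prod {K : Type*} [Field K] (v : K → ℝ)
    (hv_mul : ∀ x y : K, x ≠ 0 → y ≠ 0 → v (x * y) = v x + v y) {J : Type*} (s : Finset J)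
    (x : J → K) (hx : ∀ j, x j ≠ 0) :
    v (∏ j ∈ s, x j) = ∑ j ∈ s, v (x j) := by
  classical
  have h1 : v 1 = 0 := by simpa using aux_v_pow v hv_mul 1 one_ne_zero 0
  induction s using Finset.induction_on with
  | empty => simp [h1]
  | insert j s hj ih =>
    rw [Finset.prod_insert hj, Finset.sum_insert hj,
      hv_mul _ _ (hx j) (Finset.prod_ne_zero_iff.2 fun i _ => hx i), ih]

theorem aux_v_unit {K : Type*} [Field K] (v : K → ℝ)
    (hv_mul : ∀ x y : K, x ≠ 0 → y ≠ 0 → v (x * y) = v x + v y) (A : ValuationSubring K)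
    (hA : ∀ x : K, x ≠ 0 → (x ∈ A ↔ 0 ≤ v x)) (x : A) (hx : IsUnit x) : v (x : K) = 0 := by
  have h1 : v 1 = 0 := by simpa using aux_v_pow v hv_mul 1 one_ne_zero 0
  obtain ⟨y, hy⟩ := hx.exists_right_inv
  have hxy : (x : K) * (y : K) = 1 := by exact_mod_cast congrArg Subtype.val hy
  have hx0 : (x : K) ≠ 0 := left_ne_zero_of_mul_eq_one hxy
  have hy0 : (y : K) ≠ 0 := right_ne_zero_of_mul_eq_one hxy
  have := hv_mul _ _ hx0 hy0
  rw [hxy, h1] at this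
  have h2 := (hA _ hx0).1 x.2
  have h3 := (hA _ hy0).1 y.2
  linarith

theorem aux_v_det {K : Type*} [Field K] (v : K → ℝ)
    (hv_mul : ∀ x y : K, x ≠ 0 → y ≠ 0 → v (x * y) = v x + v y) (A : ValuationSubring K)
    (hA : ∀ x : K, x ≠ 0 → (x ∈ A ↔ 0 ≤ v x)) (ϖ : A) (hϖ0 : ϖ ≠ 0) (hϖ : v (ϖ : K) = 1)
    (e : ℕ) (he : 0 < e)
    {N : Type*} [AddCommGroup N] [Module A N] [Module.Free A N] [Module.Finite A N]
    (f u u' : N →ₗ[A] N) (hu : u ∘ₗ u' = LinearMap.id) (hf : ∀ x, (f ^ e) x = ϖ • u x) :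
    LinearMap.det f ≠ 0 ∧ v ((LinearMap.det f : A) : K) = (Module.finrank A N : ℝ) / e := by
  have hU : IsUnit (LinearMap.det u) := by
    refine IsUnit.of_mul_eq_one (LinearMap.det u') ?_
    rw [← LinearMap.det_comp, hu, LinearMap.det_id]
  have h1 : f ^ e = ϖ • u := LinearMap.ext hf
  have h2 := congrArg LinearMap.det h1
  rw [map_pow, LinearMap.det_smul] at h2
  have hne : LinearMap.det f ≠ 0 := by
    intro h0
    rw [h0, zero_pow he.ne'] at h2
    exact mul_ne_zero (pow_ne_zero _ hϖ0) hU.ne_zero h2.symm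
  refine ⟨hne, ?_⟩
  have hne' : ((LinearMap.det f : A) : K) ≠ 0 := by simpa using hne
  have hw' : (ϖ : K) ≠ 0 := by simpa using hϖ0
  have hU' : ((LinearMap.det u : A) : K) ≠ 0 := by simpa using hU.ne_zero
  have h3 : ((LinearMap.det f : A) : K) ^ e
      = (ϖ : K) ^ (Module.finrank A N) * ((LinearMap.det u : A) : K) := by
    exact_mod_cast congrArg Subtype.val h2
  have h4 := congrArg v h3
  rw [aux_v_pow v hv_mul _ hne', hv_mul _ _ (pow_ne_zero _ hw') hU', aux_v_pow v hv_mul _ hw',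
    hϖ, aux_v_unit v hv_mul A hA _ hU] at h4
  have : (0 : ℝ) < e := by exact_mod_cast he
  field_simp
  linarith

theorem aux_indep {K : Type*} [Field K] {V : Type*} [AddCommGroup V] [Module K V]
    [FiniteDimensional K V] {T : Type*} [Fintype T] (W : T → Submodule K V) (h : iSupIndep W) :
    ∑ t, Module.finrank K (W t) = Module.finrank K (⨆ t, W t : Submodule K V) := by
  classical
  have hi := h.dfinsupp_lsum_injective
  have e := LinearEquiv.ofInjective _ hi
  have h1 := e.finrank_eq
  rw [← Submodule.iSup_eq_range_dfinsupp_lsum] at h1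
  rw [← h1]
  exact (Module.finrank_directSum (R := K) (fun t => W t)).symm

theorem aux_core {K : Type*} [Field K] (v : K → ℝ)
    (hv_mul : ∀ x y : K, x ≠ 0 → y ≠ 0 → v (x * y) = v x + v y) (A : ValuationSubring K)
    (hA : ∀ x : K, x ≠ 0 → (x ∈ A ↔ 0 ≤ v x)) (ϖ : A) (hϖ0 : ϖ ≠ 0) (hϖ : v (ϖ : K) = 1)
    (e : ℕ) (he : 0 < e)
    {M : Type*} [AddCommGroup M] [Module A M] [Module.Free A M] [Module.Finite A M]
    (f u u' : M →ₗ[A] M) (hu : u ∘ₗ u' = LinearMap.id) (hf : ∀ x, (f ^ e) x = ϖ • u x)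
    {T : Type*} [Fintype T] [DecidableEq T] (V : T → Submodule K (K ⊗[A] M))
    (hV : DirectSum.IsInternal V)
    (hfV : ∀ t, ∃ c : K, ∀ w ∈ V t, f.baseChange K w = c • w)
    (huV : ∀ t, ∃ c : K, ∀ w ∈ V t, u.baseChange K w = c • w)
    (huV' : ∀ t, ∃ c : K, ∀ w ∈ V t, u'.baseChange K w = c • w)
    {J : Type*} [Fintype J] [DecidableEq J] (a : J → A) (ha : ∀ j, a j ≠ 0)
    (q : M →ₗ[A] ((j : J) → A ⧸ Ideal.span {a j})) (hq : Function.Surjective q)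
    (hqf : ∀ m, q (f m) = 0) :
    (∑ t, Module.finrank K (V t) = Module.finrank A M) ∧
    (∑ j, v (a j : K)) ≤ (∑ t, ((min (Fintype.card J) (Module.finrank K (V t)) : ℕ) : ℝ)) / e ∧
    ((∀ m, q m = 0 → ∃ m', f m' = m) → (∑ j, v (a j : K)) = (Module.finrank A M : ℝ) / e) := by
  obtain ⟨hind, htop⟩ := (DirectSum.isInternal_submodule_iff_iSupIndep_and_iSup_eq_top V).1 hV
  have hsum : ∑ t, Module.finrank K (V t) = Module.finrank A M := by
    rw [aux_indep V hind, htop, finrank_top, Module.finrank_baseChange]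
  obtain ⟨g, Ψ, hΨ, hass, hunit⟩ := aux_det a ha f q hq hqf
  obtain ⟨hd0, hdv⟩ := aux_v_det v hv_mul A hA ϖ hϖ0 hϖ e he f u u' hu hf
  have hd0' : ((LinearMap.det f : A) : K) ≠ 0 := by simpa using hd0
  obtain ⟨c, hc⟩ := hass
  have hΨ0 : LinearMap.det Ψ ≠ 0 := by
    intro h
    rw [h, mul_zero, zero_mul] at hc
    exact hd0 hc.symm
  have hΨ0' : ((LinearMap.det Ψ : A) : K) ≠ 0 := by simpa using hΨ0
  have ha' : ∀ j, (a j : K) ≠ 0 := fun j => by simpa using ha j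
  have hc0 : ((c : A) : K) ≠ 0 := by simp
  have hc' : (∏ j, (a j : K)) * ((LinearMap.det Ψ : A) : K) * ((c : A) : K)
      = ((LinearMap.det f : A) : K) := by
    have := congrArg (algebraMap A K) hc
    rw [map_mul, map_mul, map_prod] at this
    exact this
  have hP0 : (∏ j, (a j : K)) ≠ 0 := Finset.prod_ne_zero_iff.2 fun j _ => ha' j
  have hval := congrArg v hc'
  rw [hv_mul _ _ (mul_ne_zero hP0 hΨ0') hc0, hv_mul _ _ hP0 hΨ0', aux_v_prod v hv_mul _ _ ha',
    aux_v_unit v hv_mul A hA _ c.isUnit, hdv, add_zero] at hval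
  refine ⟨hsum, ?_, ?_⟩
  swap
  · intro h
    rw [aux_v_unit v hv_mul A hA _ (hunit h), add_zero] at hval
    exact hval
  -- the subspace `W`
  let W : T → Submodule K (K ⊗[A] M) := fun t => V t ⊓ LinearMap.ker (g.baseChange K)
  have hWV : ∀ t, W t ≤ V t := fun t => inf_le_left
  have hWind : iSupIndep W := hind.mono hWV
  let W' : Submodule K (K ⊗[A] M) := ⨆ t, W t
  have hWg : W' ≤ LinearMap.ker (g.baseChange K) := iSup_le fun t => inf_le_right
  have hWs : ∀ h : M →ₗ[A] M, (∀ t, ∃ c : K, ∀ w ∈ V t, h.baseChange K w = c • w) →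
      ∀ w ∈ W', h.baseChange K w ∈ W' := by
    intro h hh
    have : W' ≤ W'.comap (h.baseChange K) := by
      refine iSup_le fun t w hw => ?_
      obtain ⟨c, hc⟩ := hh t
      rw [Submodule.mem_comap, hc w (hWV t hw)]
      exact W'.smul_mem _ ((le_iSup W t) hw)
    exact this
  let N : Submodule A M := (W'.restrictScalars A).comap (TensorProduct.mk A K M 1)
  have hN : ∀ m, m ∈ N ↔ (1 : K) ⊗ₜ[A] m ∈ W' := fun m => Iff.rfl
  have hNs : ∀ h : M →ₗ[A] M, (∀ t, ∃ c : K, ∀ w ∈ V t, h.baseChange K w = c • w) →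
      ∀ m ∈ N, h m ∈ N := by
    intro h hh m hm
    rw [hN] at hm ⊢
    simpa using hWs h hh _ hm
  have hginj : ∀ y : J → A, (1 : K) ⊗ₜ[A] y = 0 → y = 0 := by
    intro y hy
    have hinj : Function.Injective (TensorProduct.mk A K (J → A) 1) := by
      have := Module.Flat.rTensor_preserves_injective_linearMap (M := J → A)
        (Algebra.linearMap A K) (FaithfulSMul.algebraMap_injective A K)
      intro x y hxy
      have h2 := @this (1 ⊗ₜ x) (1 ⊗ₜ y) (by simpa using hxy)
      have h3 := congrArg (TensorProduct.lid A (J → A)) h2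
      simpa using h3
    exact hinj (by simpa using hy)
  have hNg : ∀ m ∈ N, g m = 0 := by
    intro m hm
    apply hginj
    have := hWg ((hN m).1 hm)
    simpa using this
  obtain ⟨hrank, hsat⟩ := aux_rank A W' N hN
  obtain ⟨-, i2, i3⟩ := aux_free' A N hsat
  obtain ⟨hn0, hnv⟩ := aux_v_det v hv_mul A hA ϖ hϖ0 hϖ e he (f.restrict (hNs f hfV))
    (u.restrict (hNs u huV)) (u'.restrict (hNs u' huV'))
    (by
      ext x
      exact LinearMap.congr_fun hu (x : M))
    (by
      intro x
      apply Subtype.ext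
      rw [Module.End.pow_restrict]
      exact hf x)
  -- the submodule of `M × A^J`
  let N' : Submodule A (M × (J → A)) := N.prod ⊥
  have hsat' : ∀ (r : A) (x : M × (J → A)), r ≠ 0 → r • x ∈ N' → x ∈ N' := by
    rintro r ⟨m, y⟩ hr ⟨h1, h2⟩
    refine ⟨hsat r m hr h1, ?_⟩
    have h2' : r • y = 0 := h2
    exact (smul_eq_zero.1 h2').resolve_left hr
  obtain ⟨j1, j2, j3⟩ := aux_free' A N' hsat'
  have hst : N' ≤ N'.comap Ψ := by
    rintro ⟨m, y⟩ ⟨h1, h2⟩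
    have h2' : y = 0 := h2
    subst h2'
    rw [Submodule.mem_comap, hΨ, hNg m h1]
    exact ⟨hNs f hfV m h1, rfl⟩
  let E : N ≃ₗ[A] N' := LinearEquiv.ofBijective
    (((LinearMap.inl A M (J → A)).comp N.subtype).codRestrict N' fun x => ⟨x.2, rfl⟩) (by
      constructor
      · intro x y hxy
        exact Subtype.ext (congrArg (fun z : N' => (z : M × (J → A)).1) hxy)
      · rintro ⟨⟨m, y⟩, h1, h2⟩
        have h2' : y = 0 := h2
        subst h2'
        exact ⟨⟨m, h1⟩, rfl⟩)
  have hdet := LinearMap.det_eq_det_mul_det N' Ψ hst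
  have hconj : LinearMap.det (Ψ.restrict hst) = LinearMap.det (f.restrict (hNs f hfV)) := by
    rw [← LinearMap.det_conj (f.restrict (hNs f hfV)) E]
    congr 1
    apply LinearMap.ext
    intro z
    obtain ⟨x, rfl⟩ := E.surjective z
    rw [LinearMap.comp_apply, LinearMap.comp_apply, LinearEquiv.coe_coe, LinearEquiv.coe_coe,
      LinearEquiv.symm_apply_apply]
    apply Subtype.ext
    show Ψ ((x : M), 0) = (f x, 0)
    rw [hΨ, hNg x x.2]
  rw [hconj] at hdet
  have hn0' : ((LinearMap.det (f.restrict (hNs f hfV)) : A) : K) ≠ 0 := by simpa using hn0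
  have hq0 : (((N'.mapQ N' Ψ hst).det : A) : K) ≠ 0 := by
    intro h
    have : (N'.mapQ N' Ψ hst).det = 0 := by simpa using h
    rw [this, mul_zero] at hdet
    exact hΨ0 hdet
  have hqv := (hA _ hq0).1 (N'.mapQ N' Ψ hst).det.2
  have hdet' : ((LinearMap.det Ψ : A) : K) = ((LinearMap.det (f.restrict (hNs f hfV)) : A) : K)
      * (((N'.mapQ N' Ψ hst).det : A) : K) := congrArg Subtype.val hdet
  rw [hdet', hv_mul _ _ hn0' hq0, hnv] at hval
  -- ranks
  have hWr : ∀ t, Module.finrank K (V t) ≤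
      Module.finrank K (W t) + min (Fintype.card J) (Module.finrank K (V t)) := by
    intro t
    have h1 := LinearMap.finrank_range_add_finrank_ker (K := K) (V := V t)
      (V₂ := K ⊗[A] (J → A)) ((g.baseChange K).domRestrict (V t))
    have h2 : Module.finrank K (LinearMap.ker ((g.baseChange K).domRestrict (V t)))
        ≤ Module.finrank K (W t) := by
      rw [LinearEquiv.finrank_eq (Submodule.equivSubtypeMap _ _)]
      apply Submodule.finrank_mono
      rintro w ⟨⟨x, hx⟩, hx', rfl⟩
      exact ⟨hx, hx'⟩
    have h3 := Submodule.finrank_le (LinearMap.range ((g.baseChange K).domRestrict (V t)))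
    rw [Module.finrank_baseChange, Module.finrank_fintype_fun_eq_card] at h3
    omega
  have hWsum := aux_indep W hWind
  have h5 : Module.finrank A M ≤ Module.finrank A N
      + ∑ t, min (Fintype.card J) (Module.finrank K (V t)) := by
    rw [← hsum]
    refine (Finset.sum_le_sum fun t _ => hWr t).trans ?_
    rw [Finset.sum_add_distrib, hWsum]
    exact Nat.add_le_add_right hrank _
  have h6 : (Module.finrank A M : ℝ) ≤ Module.finrank A N
      + ∑ t, ((min (Fintype.card J) (Module.finrank K (V t)) : ℕ) : ℝ) := by
    exact_mod_cast h5
  have he' : (0 : ℝ) < e := by exact_mod_cast he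
  have h7 := div_le_div_of_nonneg_right h6 he'.le
  rw [add_div] at h7
  linarith

theorem statement6
    -- the complete rank-one valued field `(K, v)` extending `ℚ_p`, with valuation ring `O_K = A`
    {p : ℕ} [Fact p.Prime] {K : Type*} [Field K] [Algebra ℚ_[p] K]
    (v : K → ℝ)
    (hv_mul : ∀ x y : K, x ≠ 0 → y ≠ 0 → v (x * y) = v x + v y)
    (hv_add : ∀ x y : K, x ≠ 0 → y ≠ 0 → x + y ≠ 0 → min (v x) (v y) ≤ v (x + y))
    (hv_p : v (p : K) = 1)
    (A : ValuationSubring K)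
    (hA : ∀ x : K, x ≠ 0 → (x ∈ A ↔ 0 ≤ v x))
    -- the finite extension `F` of `ℚ_p`, its ring of integers `O_F`, uniformiser `π`,
    -- ramification index `e`; `K` contains a Galois closure of `F|ℚ_p`
    {F : Type*} [Field F] [Algebra ℚ_[p] F] [FiniteDimensional ℚ_[p] F]
    [Fintype (F →ₐ[ℚ_[p]] K)] [DecidableEq (F →ₐ[ℚ_[p]] K)]
    (OF : Subring F) (π : OF) (e : ℕ) (he : 0 < e)
    (hπe : ∃ u : OFˣ, (π : F) ^ e = (p : F) * ((u : OF) : F))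
    (hτO : ∀ (τ : F →ₐ[ℚ_[p]] K) (x : OF), τ (x : F) ∈ A)
    (hτπ : ∀ τ : F →ₐ[ℚ_[p]] K, v (τ (π : F)) = 1 / e)
    -- the finitely generated free `O_K`-module `M` with `O_F`-action `ι`,
    -- and the eigenspace decomposition `M_K = ⊕_τ M_{K,τ}`
    {M : Type*} [AddCommGroup M] [Module A M] [Module.Free A M] [Module.Finite A M]
    (ι : OF →+* Module.End A M)
    (hdec : DirectSum.IsInternal (fun τ : F →ₐ[ℚ_[p]] K => eigenspaceOF A OF ι τ))
    -- the given isomorphism `M/ι(π)(M) ≅ ⊕_{j=1}^n O_K/a_jO_K`, decreasing valuations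
    {n : ℕ} (a : Fin n → A) (ha0 : ∀ j, a j ≠ 0)
    (ha : ∀ i j : Fin n, i ≤ j → v (a j : K) ≤ v (a i : K))
    (eq : (M ⧸ LinearMap.range (ι π)) ≃ₗ[A] ((j : Fin n) → A ⧸ Ideal.span {a j})) :
    -- (a) `∑_j v(a_j) = rk(M)/e = (∑_τ r_τ)/e`
    (∑ j, v ((a j : A) : K)) = (Module.finrank A M : ℝ) / e ∧
    (∑ j, v ((a j : A) : K))
      = (∑ τ : F →ₐ[ℚ_[p]] K, (Module.finrank K (eigenspaceOF A OF ι τ) : ℝ)) / e ∧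
    -- (b) for every `0 ≤ i ≤ n`, `∑_{j=1}^i v(a_j) ≤ (1/e)·∑_τ min{i, r_τ}`
    ∀ i : ℕ, i ≤ n →
      (∑ j ∈ Finset.univ.filter (fun j : Fin n => (j : ℕ) < i), v ((a j : A) : K))
        ≤ (∑ τ : F →ₐ[ℚ_[p]] K,
            ((min i (Module.finrank K (eigenspaceOF A OF ι τ)) : ℕ) : ℝ)) / e := by
  obtain ⟨w, hw⟩ := hπe
  have hp0 : (p : ℚ_[p]) ≠ 0 := by exact_mod_cast (Fact.out : p.Prime).ne_zero
  have hpK : ((p : A) : K) ≠ 0 := by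
    have : (algebraMap ℚ_[p] K) (p : ℚ_[p]) ≠ 0 :=
      (map_ne_zero _).2 hp0
    simpa using this
  have hϖ0 : (p : A) ≠ 0 := by
    intro h
    apply hpK
    rw [h]; rfl
  have hϖ : v ((p : A) : K) = 1 := by simpa using hv_p
  have hπ : π ^ e = (p : OF) * (w : OF) := by
    apply Subtype.ext
    simpa using hw
  have hu : (ι (w : OF)) ∘ₗ (ι ((w⁻¹ : OFˣ) : OF)) = LinearMap.id := by
    rw [← Module.End.mul_eq_comp, ← map_mul, Units.mul_inv, map_one]; rfl
  have hf : ∀ x, ((ι π) ^ e) x = (p : A) • ι (w : OF) x := by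
    intro x
    rw [← map_pow, hπ, map_mul, map_natCast, Module.End.mul_apply, Module.End.natCast_apply,
      Nat.cast_smul_eq_nsmul]
  have hsc : ∀ (b : OF) (τ : F →ₐ[ℚ_[p]] K), ∃ c : K, ∀ z ∈ eigenspaceOF A OF ι τ,
      (ι b).baseChange K z = c • z := by
    intro b τ
    refine ⟨τ (b : F), fun z hz => ?_⟩
    have := (Submodule.mem_iInf _).1 hz b
    rw [LinearMap.mem_ker, LinearMap.sub_apply, sub_eq_zero] at this
    exact this
  let q : M →ₗ[A] ((j : Fin n) → A ⧸ Ideal.span {a j}) :=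
    eq.toLinearMap ∘ₗ (LinearMap.range (ι π)).mkQ
  have hq : Function.Surjective q := eq.surjective.comp (Submodule.mkQ_surjective _)
  have hq0 : ∀ m, q m = 0 ↔ ∃ m', ι π m' = m := by
    intro m
    show eq (Submodule.Quotient.mk m) = 0 ↔ _
    rw [LinearEquiv.map_eq_zero_iff, Submodule.Quotient.mk_eq_zero]
    rfl
  obtain ⟨c1, -, c3⟩ := aux_core v hv_mul A hA (p : A) hϖ0 hϖ e he (ι π) _ _ hu hf
    (fun τ : F →ₐ[ℚ_[p]] K => eigenspaceOF A OF ι τ) hdec (hsc _) (hsc _) (hsc _) a ha0 q hq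
    (fun m => (hq0 _).2 ⟨m, rfl⟩)
  have c4 := c3 fun m => (hq0 m).1
  refine ⟨c4, ?_, ?_⟩
  · rw [c4, ← c1]
    push_cast
    rfl
  · intro i hi
    let r : ((j : Fin n) → A ⧸ Ideal.span {a j}) →ₗ[A]
        ((j : {j : Fin n // (j : ℕ) < i}) → A ⧸ Ideal.span {a j.1}) :=
      LinearMap.pi fun j => LinearMap.proj j.1
    have hr : Function.Surjective r := by
      intro y
      refine ⟨fun j => if h : (j : ℕ) < i then y ⟨j, h⟩ else 0, ?_⟩
      funext j
      show (if h : (j.1 : ℕ) < i then y ⟨j.1, h⟩ else 0) = y j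
      rw [dif_pos j.2]
    obtain ⟨-, c2, -⟩ := aux_core v hv_mul A hA (p : A) hϖ0 hϖ e he (ι π) _ _ hu hf
      (fun τ : F →ₐ[ℚ_[p]] K => eigenspaceOF A OF ι τ) hdec (hsc _) (hsc _) (hsc _)
      (fun j : {j : Fin n // (j : ℕ) < i} => a j.1) (fun j => ha0 j.1) (r ∘ₗ q) (hr.comp hq)
      (fun m => by rw [LinearMap.comp_apply, (hq0 _).2 ⟨m, rfl⟩, map_zero])
    have hcard : Fintype.card {j : Fin n // (j : ℕ) < i} = i := by
      rw [Fintype.card_subtype, Fin.card_filter_val_lt, min_eq_right hi]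
    rw [hcard] at c2
    refine le_trans (le_of_eq ?_) c2
    exact (Finset.sum_subtype _ (by simp) _)
end

section
/- Let M be a finitely generated free O_K-module of rank r, equipped with a ℤ_p-algebra homomorphism ι : O_F → End_{O_K}(M), and assume that at most e of the embeddings τ : F → K satisfy M_{K,τ} ≠ 0. Let r_1 ≥ r_2 ≥ … ≥ r_e ≥ 0 be the decreasing rearrangement of the family (r_τ)_τ, padded with zeros (so r = r_1 + … + r_e). Let M̄ := M ⊗_{O_K} κ with the endomorphism induced by ι(π), and for j ≥ 0 let M̄[π^j] denote the kernel of the j-th power of this endomorphism. Then the following are equivalent: (i) there is an isomorphism M/ι(π)(M) ≅ ⊕_{j=1}^{r} O_K/c_jO_K with nonzero c_j ∈ O_K satisfying v(c_j) = (1/e)·#{1 ≤ i ≤ e : r_i ≥ j} for every 1 ≤ j ≤ r; (ii) dim_κ (M̄[π^j]/M̄[π^{j-1}]) = r_j for every 1 ≤ j ≤ e. -/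
/-!
STATEMENT 7 (Proposition 4.10, module-theoretic form): with `r_1 ≥ … ≥ r_e` the decreasing
rearrangement of `(r_τ)_τ` padded with zeros, the elementary divisors of `M/ι(π)M` have
valuations `v(c_j) = (1/e)·#{i : r_i ≥ j}` if and only if
`dim_κ(M̄[π^j]/M̄[π^{j-1}]) = r_j` for every `1 ≤ j ≤ e`.
-/

set_option synthInstance.maxHeartbeats 1000000
set_option maxHeartbeats 1000000

open scoped TensorProduct

set_option linter.unusedSectionVars false

namespace S7
open IsLocalRing Module
universe u w
variable {A : Type u} [CommRing A] [IsDomain A] [ValuationRing A]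
variable {M : Type w} [AddCommGroup M] [Module A M]

lemma mem_m_smul (x : M) :
    x ∈ (maximalIdeal A • ⊤ : Submodule A M) ↔ ∃ a ∈ maximalIdeal A, ∃ y : M, x = a • y := by
  constructor
  · intro h
    induction h using Submodule.smul_induction_on' with
    | smul a ha y _ => exact ⟨a, ha, y, rfl⟩
    | add x _ y _ hx hy =>
      obtain ⟨a, ha, x, rfl⟩ := hx
      obtain ⟨b, hb, y, rfl⟩ := hy
      rcases ValuationRing.dvd_total a b with ⟨c, rfl⟩ | ⟨c, rfl⟩
      · exact ⟨a, ha, x + c • y, by rw [smul_add, mul_smul]⟩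
      · exact ⟨b, hb, c • x + y, by rw [smul_add, mul_smul]⟩
  · rintro ⟨a, ha, y, rfl⟩
    exact Submodule.smul_mem_smul ha trivial

lemma tmul_eq_zero_iff (x : M) :
    (1 : ResidueField A) ⊗ₜ[A] x = 0 ↔ ∃ a ∈ maximalIdeal A, ∃ y : M, x = a • y := by
  rw [← mem_m_smul]
  refine ((TensorProduct.quotTensorEquivQuotSMul M (maximalIdeal A)).map_eq_zero_iff
    (x := (1 : ResidueField A) ⊗ₜ[A] x)).symm.trans ?_
  have h2 : (TensorProduct.quotTensorEquivQuotSMul M (maximalIdeal A))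
     ((1 : ResidueField A) ⊗ₜ[A] x) = Submodule.Quotient.mk x := by
    have := TensorProduct.quotTensorEquivQuotSMul_mk_tmul (maximalIdeal A) (1:A) x
    rw [one_smul] at this
    exact this
  rw [h2, Submodule.Quotient.mk_eq_zero]

lemma exists_tmul (x : ResidueField A ⊗[A] M) : ∃ y : M, x = 1 ⊗ₜ y := by
  obtain ⟨y, hy⟩ := TensorProduct.mk_surjective A M (ResidueField A) residue_surjective x
  exact ⟨y, hy.symm⟩

/-- common factor of finitely many elements in the maximal ideal -/
lemma common_factor {ι : Type*} [Finite ι] (f : ι → A) (hf : ∀ i, f i ∈ maximalIdeal A) :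
    ∃ a ∈ maximalIdeal A, ∃ g : ι → A, ∀ i, f i = a * g i := by
  classical
  have : f ∈ (maximalIdeal A • ⊤ : Submodule A (ι → A)) := by
    have := Fintype.ofFinite ι
    rw [pi_eq_sum_univ f]
    refine Submodule.sum_mem _ fun i _ => Submodule.smul_mem_smul (hf i) trivial
  obtain ⟨a, ha, y, h⟩ := (mem_m_smul f).1 this
  exact ⟨a, ha, y, fun i => by rw [h]; rfl⟩

/-- cofactor -/
lemma cofactor {ϖ a : A} (hϖ : ϖ ≠ 0) (hϖm : ϖ ∈ maximalIdeal A) (ha : a ∈ maximalIdeal A) :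
    ∃ b : A, ϖ ∣ a * b ∧ ¬ ϖ ∣ b := by
  rcases ValuationRing.dvd_total ϖ a with ⟨c, rfl⟩ | ⟨c, rfl⟩
  · refine ⟨1, ⟨c, by ring⟩, fun h => ?_⟩
    exact (mem_maximalIdeal _).1 hϖm (isUnit_of_dvd_one h)
  · refine ⟨c, dvd_rfl, ?_⟩
    rintro ⟨d, hd⟩
    refine (mem_maximalIdeal _).1 ha ?_
    have hc : c ≠ 0 := right_ne_zero_of_mul hϖ
    have : c * (a * d) = c * 1 := by linear_combination - hd
    exact IsUnit.of_mul_eq_one _ (mul_left_cancel₀ hc this)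

lemma free_of_tf [Module.Finite A M] (h : ∀ (a : A) (x : M), a ≠ 0 → a • x = 0 → x = 0) :
    Module.Free A M := by
  have : Module.Flat A M := by
    rw [Module.Flat.flat_iff_torsion_eq_bot_of_isBezout, eq_bot_iff]
    rintro x ⟨a, ha⟩
    exact h a x (nonZeroDivisors.coe_ne_zero a) ha
  exact Module.free_of_flat_of_isLocalRing

/-- filtration data -/
structure IsFilt (φ : Module.End A M) (ϖ : A) (n : ℕ) (r : ℕ → ℕ) (W : ℕ → Submodule A M) :
    Prop where
  zero : W 0 = ⊥
  top : W n = ⊤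
  mono : Monotone W
  sat : ∀ i (a : A) (x : M), a ≠ 0 → a • x ∈ W i → x ∈ W i
  act : ∀ i < n, ∃ u : Aˣ, ∀ x ∈ W (i + 1), φ x - ((u : A) * ϖ) • x ∈ W i
  rank : ∀ i < n, finrank A (M ⧸ W i) = finrank A (M ⧸ W (i + 1)) + r i

lemma IsFilt.map_le {φ : Module.End A M} {ϖ : A} {n : ℕ} {r : ℕ → ℕ} {W : ℕ → Submodule A M}
    (h : IsFilt φ ϖ (n + 1) r W) {i : ℕ} (hi : i ≤ n + 1) : W i ≤ (W i).comap φ := by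
  intro x hx
  cases i with
  | zero => rw [h.zero] at hx ⊢; rw [(Submodule.mem_bot A).1 hx]; simp
  | succ i =>
    obtain ⟨u, hu⟩ := h.act i (by omega)
    have := h.mono (Nat.le_succ i) (hu x hx)
    have h2 := (W (i+1)).add_mem this ((W (i+1)).smul_mem ((u:A) * ϖ) hx)
    simpa using h2

lemma IsFilt.step {φ : Module.End A M} {ϖ : A} {n : ℕ} {r : ℕ → ℕ} {W : ℕ → Submodule A M}
    (h : IsFilt φ ϖ (n + 1) r W) (hW : W 1 ≤ (W 1).comap φ) :
    IsFilt ((W 1).mapQ (W 1) φ hW) ϖ n (fun i => r (i + 1))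
      (fun i => (W (i + 1)).map (W 1).mkQ) := by
  have hmem : ∀ i x, (W 1).mkQ x ∈ (W (i + 1)).map (W 1).mkQ ↔ x ∈ W (i + 1) := by
    intro i x
    rw [← Submodule.mem_comap, Submodule.comap_map_mkQ, sup_eq_right.2 (h.mono (by omega))]
  refine ⟨?_, ?_, ?_, ?_, ?_, ?_⟩
  · simp
  · simp [h.top]
  · intro i j hij
    exact Submodule.map_mono (h.mono (by omega))
  · intro i a x ha hx
    obtain ⟨x, rfl⟩ := (W 1).mkQ_surjective x
    rw [← map_smul, hmem] at hx
    exact (hmem _ _).2 (h.sat _ a x ha hx)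
  · intro i hi
    obtain ⟨u, hu⟩ := h.act (i + 1) (by omega)
    refine ⟨u, ?_⟩
    rintro _ hx
    obtain ⟨x, hx, rfl⟩ := hx
    have := (hmem i _).2 (hu x hx)
    simpa using this
  · intro i hi
    have e : ∀ i, finrank A ((M ⧸ W 1) ⧸ (W (i + 1)).map (W 1).mkQ) = finrank A (M ⧸ W (i + 1)) :=
      fun i => (Submodule.quotientQuotientEquivQuotient _ _ (h.mono (by omega))).finrank_eq
    rw [e, e]
    exact h.rank (i + 1) (by omega)

/-- multiplicities -/
def ell (n : ℕ) (r : ℕ → ℕ) (j : ℕ) : ℕ := ∑ i ∈ Finset.range n, if j < r i then 1 else 0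

lemma ell_succ (n : ℕ) (r : ℕ → ℕ) (j : ℕ) :
    ell (n + 1) r j = ell n (fun i => r (i + 1)) j + if j < r 0 then 1 else 0 := by
  rw [ell, ell, Finset.sum_range_succ']

/-- elementary-divisor predicate -/
def ElDiv (φ : Module.End A M) (ϖ : A) (l : ℕ → ℕ) (m : ℕ) : Prop :=
  ∃ y : ℕ → M, (∀ x : M, ∃ α : ℕ → A, x - ∑ j ∈ Finset.range m, α j • y j ∈ LinearMap.range φ) ∧
    ∀ α : ℕ → A, ∑ j ∈ Finset.range m, α j • y j ∈ LinearMap.range φ ↔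
      ∀ j < m, ϖ ^ l j ∣ α j

lemma ElDiv.drop {φ : Module.End A M} {ϖ : A} {l : ℕ → ℕ} {m k : ℕ}
    (hl : ∀ j, m ≤ j → l j = 0) (h : ElDiv φ ϖ l (m + k)) : ElDiv φ ϖ l m := by
  obtain ⟨y, h1, h2⟩ := h
  refine ⟨y, ?_, ?_⟩
  · intro x
    obtain ⟨α, hα⟩ := h1 x
    refine ⟨α, ?_⟩
    have h3 : ∑ j ∈ Finset.range (m + k), (if j < m then 0 else α j) • y j ∈ LinearMap.range φ := by
      rw [h2]
      intro j hj
      split_ifs with h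
      · simp
      · simp [hl j (by omega)]
    have := (LinearMap.range φ).add_mem hα h3
    convert this using 1
    rw [sub_add, sub_right_inj, ← Finset.sum_sub_distrib, Finset.sum_range_add, eq_comm]
    convert add_zero _ using 2
    · apply Finset.sum_eq_zero
      intro j _
      simp
    · rename_i j hj
      simp [Finset.mem_range.1 hj]
  · intro α
    have := h2 (fun j => if j < m then α j else 0)
    rw [Finset.sum_range_add, Finset.sum_eq_zero (s := Finset.range k), add_zero] at this
    · rw [Finset.sum_congr rfl (g := fun j => α j • y j)] at this
      · rw [this]
        constructor
        · intro h j hj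
          simpa [hj] using h j (by omega)
        · intro h j hj
          split_ifs with h'
          · exact h j h'
          · simp
      · intro j hj
        simp [Finset.mem_range.1 hj]
    · intro j _
      simp

lemma ElDiv.extend {φ : Module.End A M} {ϖ : A} {l : ℕ → ℕ} {m k : ℕ}
    (hl : ∀ j, m ≤ j → l j = 0) (h : ElDiv φ ϖ l m) : ElDiv φ ϖ l (m + k) := by
  obtain ⟨y, h1, h2⟩ := h
  have key : ∀ α : ℕ → A, ∑ j ∈ Finset.range (m + k), α j • (if j < m then y j else 0)
      = ∑ j ∈ Finset.range m, α j • y j := by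
    intro α
    rw [Finset.sum_range_add, Finset.sum_eq_zero (s := Finset.range k), add_zero]
    · apply Finset.sum_congr rfl
      intro j hj
      simp [Finset.mem_range.1 hj]
    · intro j _
      simp
  refine ⟨fun j => if j < m then y j else 0, ?_, ?_⟩
  · intro x
    obtain ⟨α, hα⟩ := h1 x
    exact ⟨α, by rwa [key]⟩
  · intro α
    rw [key, h2]
    constructor
    · intro h j hj
      by_cases hjm : j < m
      · exact h j hjm
      · simp [hl j (by omega)]
    · intro h j hj
      exact h j (by omega)

lemma IsFilt.inj {φ : Module.End A M} {ϖ : A} {n : ℕ} {r : ℕ → ℕ} {W : ℕ → Submodule A M}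
    (h : IsFilt φ ϖ n r W) (hϖ : ϖ ≠ 0) : ∀ x, φ x = 0 → x = 0 := by
  intro x hx
  have : ∀ k, k ≤ n → x ∈ W (n - k) := by
    intro k
    induction k with
    | zero => intro _; simp [h.top]
    | succ k ih =>
      intro hk
      obtain ⟨u, hu⟩ := h.act (n - (k + 1)) (by omega)
      have h1 := hu x (by
        have := ih (by omega)
        rwa [show n - (k + 1) + 1 = n - k by omega])
      rw [hx, zero_sub, Submodule.neg_mem_iff] at h1
      exact h.sat _ _ x (mul_ne_zero u.ne_zero hϖ) h1
  have := this n le_rfl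
  simpa [h.zero] using this

section step
variable {φ : Module.End A M} {ϖ : A} {W : Submodule A M}

lemma kerq_le (hϖm : ϖ ∈ maximalIdeal A) (u : Aˣ)
    (hu : ∀ x ∈ W, φ x = ((u : A) * ϖ) • x) (x : M)
    (hx : (1 : ResidueField A) ⊗ₜ[A] (W.mkQ x) = 0) : (1 : ResidueField A) ⊗ₜ[A] (φ x) = 0 := by
  rw [tmul_eq_zero_iff] at hx
  obtain ⟨a, ha, y, hy⟩ := hx
  obtain ⟨y, rfl⟩ := W.mkQ_surjective y
  rw [← map_smul, ← sub_eq_zero, ← map_sub, Submodule.mkQ_apply, Submodule.Quotient.mk_eq_zero] at hy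
  have h1 := hu _ hy
  rw [tmul_eq_zero_iff, ← mem_m_smul]
  rw [map_sub, sub_eq_iff_eq_add, map_smul] at h1
  rw [h1]
  exact add_mem (Submodule.smul_mem_smul (Ideal.mul_mem_left _ _ hϖm) trivial)
    (Submodule.smul_mem_smul ha trivial)

lemma ker_of_star (hϖ : ϖ ≠ 0) (u : Aˣ)
    (hsat : ∀ (a : A) (x : M), a ≠ 0 → a • x ∈ W → x ∈ W)
    (hu : ∀ x ∈ W, φ x = ((u : A) * ϖ) • x)
    (hinj : ∀ x, φ x = 0 → x = 0)
    (star : ∀ y : M, ϖ • y ∈ LinearMap.range φ → ∃ w ∈ W, y - w ∈ LinearMap.range φ)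
    (x : M) (hϖm : ϖ ∈ maximalIdeal A)
    (hx : (1 : ResidueField A) ⊗ₜ[A] (φ x) = 0) : (1 : ResidueField A) ⊗ₜ[A] (W.mkQ x) = 0 := by
  have star' : ∀ y t : M, φ t = ϖ • y → ∃ w ∈ W, ∃ z, t = w + ϖ • z := by
    intro y t h
    obtain ⟨w, hw, z, hz⟩ := star y ⟨t, h⟩
    refine ⟨((u⁻¹ : Aˣ) : A) • w, W.smul_mem _ hw, z, ?_⟩
    rw [← sub_eq_zero]
    apply hinj
    rw [map_sub, h, map_add, map_smul, map_smul, hu w hw, hz, smul_smul, ← mul_assoc,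
      Units.inv_mul, one_mul, smul_sub]
    abel
  rw [tmul_eq_zero_iff] at hx ⊢
  obtain ⟨a, ha, y, hy⟩ := hx
  rcases ValuationRing.dvd_total ϖ a with ⟨c, rfl⟩ | ⟨b, hb⟩
  · rw [mul_smul] at hy
    obtain ⟨w, hw, z, rfl⟩ := star' _ _ hy
    refine ⟨ϖ, hϖm, W.mkQ z, ?_⟩
    rw [map_add, map_smul, Submodule.mkQ_apply, (Submodule.Quotient.mk_eq_zero W).2 hw, zero_add]
  · have hb0 : b ≠ 0 := by rintro rfl; simp at hb; exact hϖ hb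
    obtain ⟨w, hw, z, hz⟩ := star' y (b • x) (by rw [map_smul, hy, smul_smul, hb, mul_comm])
    refine ⟨a, ha, W.mkQ z, ?_⟩
    rw [← map_smul, ← sub_eq_zero, ← map_sub, Submodule.mkQ_apply, Submodule.Quotient.mk_eq_zero]
    apply hsat b _ hb0
    rw [smul_sub, hz, hb, smul_smul, mul_comm b a]
    simpa using hw

lemma star_of_eldiv (hϖ : ϖ ≠ 0) (hϖm : ϖ ∈ maximalIdeal A) (u : Aˣ)
    (hu : ∀ x ∈ W, φ x = ((u : A) * ϖ) • x)
    (hW : ∀ x, φ x ∈ W → x ∈ W)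
    {m : ℕ} (b : Basis (Fin m) A W) {l : ℕ → ℕ} (h : ElDiv φ ϖ (fun j => l j + 1) m) :
    ∀ y : M, ϖ • y ∈ LinearMap.range φ → ∃ w ∈ W, y - w ∈ LinearMap.range φ := by
  obtain ⟨y, h1, h2⟩ := h
  -- elements killed by ϖ
  have key : ∀ x : M, ϖ • x ∈ LinearMap.range φ →
      ∃ β : Fin m → A, x - ∑ j, β j • (ϖ ^ l j • y j) ∈ LinearMap.range φ := by
    intro x hx
    obtain ⟨α, hα⟩ := h1 x
    have h3 : ∑ j ∈ Finset.range m, (ϖ * α j) • y j ∈ LinearMap.range φ := by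
      have := sub_mem hx ((LinearMap.range φ).smul_mem ϖ hα)
      rw [smul_sub, sub_sub_cancel, Finset.smul_sum] at this
      simpa [mul_smul] using this
    rw [h2] at h3
    have h4 : ∀ j : Fin m, ϖ ^ l j ∣ α j := by
      intro j
      have := h3 j j.2
      rw [pow_succ'] at this
      exact (mul_dvd_mul_iff_left hϖ).1 this
    choose β hβ using h4
    refine ⟨β, ?_⟩
    convert hα using 2
    rw [Finset.sum_range]
    refine Finset.sum_congr rfl fun j _ => ?_
    rw [hβ, smul_smul, mul_comm]
  have hq : ∀ j : Fin m, ϖ • (ϖ ^ l j • y j) ∈ LinearMap.range φ := by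
    intro j
    have := (h2 (Pi.single (j : ℕ) (ϖ ^ (l j + 1)))).2 (by
      intro i hi
      by_cases hij : i = j
      · subst hij; simp
      · simp [hij])
    rw [Finset.sum_eq_single (j : ℕ)] at this
    · simpa [smul_smul, pow_succ'] using this
    · intro i _ hij; simp [hij]
    · intro hj; exact absurd (Finset.mem_range.2 j.2) hj
  have hb : ∀ i, ϖ • (b i : M) ∈ LinearMap.range φ := by
    intro i
    refine ⟨((u⁻¹ : Aˣ) : A) • (b i : M), ?_⟩
    rw [map_smul, hu _ (b i).2, smul_smul, ← mul_assoc, Units.inv_mul, one_mul]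
  choose T hT using fun i => key (b i) (hb i)
  have hcomb : ∀ α : Fin m → A, ∑ i, α i • (b i : M) -
      ∑ j, (Matrix.vecMul α (Matrix.of T)) j • (ϖ ^ l j • y j) ∈ LinearMap.range φ := by
    intro α
    have : ∑ i, α i • ((b i : M) - ∑ j, T i j • (ϖ ^ l j • y j)) ∈ LinearMap.range φ :=
      Submodule.sum_mem _ fun i _ => Submodule.smul_mem _ _ (hT i)
    convert this using 1
    simp only [smul_sub, Finset.sum_sub_distrib, Finset.smul_sum, Matrix.vecMul, dotProduct,
      Finset.sum_smul]
    congr 1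
    rw [Finset.sum_comm]
    refine Finset.sum_congr rfl fun i _ => Finset.sum_congr rfl fun j _ => ?_
    rw [smul_smul (α i), Matrix.of_apply]
  have hdet : IsUnit (Matrix.of T).det := by
    by_contra hd
    have hd' : ((Matrix.of T).map (residue A)).det = 0 := by
      rw [← RingHom.mapMatrix_apply, ← RingHom.map_det, residue_eq_zero_iff, mem_maximalIdeal]
      exact hd
    obtain ⟨a', ha', hav⟩ := Matrix.exists_vecMul_eq_zero_iff.2 hd'
    choose α hα using fun i => residue_surjective (a' i)
    obtain rfl : (fun i => residue A (α i)) = a' := funext hα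
    have hm : ∀ j, Matrix.vecMul α (Matrix.of T) j ∈ maximalIdeal A := by
      intro j
      rw [← residue_eq_zero_iff]
      have := congrFun hav j
      simpa [Matrix.vecMul, dotProduct] using this
    obtain ⟨a, ha, g, hg⟩ := common_factor _ hm
    obtain ⟨c, ⟨d, hd1⟩, hc⟩ := cofactor hϖ hϖm ha
    have h5 := (LinearMap.range φ).smul_mem c (hcomb α)
    have h6 : c • ∑ j, (Matrix.vecMul α (Matrix.of T)) j • (ϖ ^ l j • y j) ∈ LinearMap.range φ := by
      rw [Finset.smul_sum]
      refine Submodule.sum_mem _ fun j _ => ?_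
      rw [hg, smul_smul, show c * (a * g j) = (d * g j) * ϖ by linear_combination g j * hd1,
        mul_smul]
      exact Submodule.smul_mem _ _ (hq j)
    have h7 := add_mem h5 h6
    rw [smul_sub, sub_add_cancel] at h7
    obtain ⟨t, ht⟩ := h7
    have htW : t ∈ W := by
      apply hW
      rw [ht]
      exact W.smul_mem _ (W.sum_mem fun i _ => W.smul_mem _ (b i).2)
    rw [hu t htW] at ht
    have h8 : (((u : A) * ϖ) • (⟨t, htW⟩ : W)) = c • ∑ i, α i • b i := by
      apply Subtype.ext
      simpa using ht
    apply ha'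
    funext i
    rw [Pi.zero_apply, residue_eq_zero_iff, mem_maximalIdeal]
    intro hai
    have h9 := congrArg (fun z => b.repr z i) h8
    simp only [map_smul, Finsupp.smul_apply, b.repr_sum_self, smul_eq_mul] at h9
    apply hc
    have h10 : ϖ ∣ c * α i := ⟨u * b.repr ⟨t, htW⟩ i, by rw [← h9]; ring⟩
    exact (hai.dvd_mul_right).1 h10
  intro x hx
  obtain ⟨β, hβ⟩ := key x hx
  let α := Matrix.vecMul β (Matrix.of T)⁻¹
  have hα : Matrix.vecMul α (Matrix.of T) = β := by
    simp only [α]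
    rw [Matrix.vecMul_vecMul, Matrix.nonsing_inv_mul _ hdet, Matrix.vecMul_one]
  refine ⟨∑ i, α i • (b i : M), W.sum_mem fun i _ => W.smul_mem _ (b i).2, ?_⟩
  have h3 := hcomb α
  rw [hα] at h3
  have := sub_mem hβ h3
  rwa [sub_sub_sub_cancel_right] at this

lemma fwd_eldiv (hϖ : ϖ ≠ 0) (u : Aˣ)
    (hu : ∀ x ∈ W, φ x = ((u : A) * ϖ) • x) (hle : W ≤ W.comap φ)
    (star : ∀ y : M, ϖ • y ∈ LinearMap.range φ → ∃ w ∈ W, y - w ∈ LinearMap.range φ)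
    {m : ℕ} {l : ℕ → ℕ} (h : ElDiv φ ϖ (fun j => l j + 1) m) :
    ElDiv (W.mapQ W φ hle) ϖ l m := by
  obtain ⟨y, h1, h2⟩ := h
  refine ⟨fun j => W.mkQ (y j), ?_, ?_⟩
  · intro x
    obtain ⟨x, rfl⟩ := W.mkQ_surjective x
    obtain ⟨α, z, hz⟩ := h1 x
    refine ⟨α, W.mkQ z, ?_⟩
    simp only [← map_smul, ← map_sum, ← map_sub]
    rw [← hz]; simp
  · intro α
    have e : ∑ j ∈ Finset.range m, α j • W.mkQ (y j) ∈ LinearMap.range (W.mapQ W φ hle) ↔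
        ϖ • ∑ j ∈ Finset.range m, α j • y j ∈ LinearMap.range φ := by
      simp only [← map_smul, ← map_sum]
      constructor
      · rintro ⟨z, hz⟩
        obtain ⟨z, rfl⟩ := W.mkQ_surjective z
        rw [Submodule.mkQ_apply, Submodule.mapQ_apply, ← Submodule.mkQ_apply, ← sub_eq_zero,
          ← map_sub, Submodule.mkQ_apply, Submodule.Quotient.mk_eq_zero] at hz
        refine ⟨ϖ • z - ((u⁻¹ : Aˣ) : A) • (φ z - ∑ j ∈ Finset.range m, α j • y j), ?_⟩
        rw [map_sub, map_smul, map_smul, hu _ hz, smul_smul, ← mul_assoc, Units.inv_mul, one_mul,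
          ← smul_sub, sub_sub_cancel]
      · intro hh
        obtain ⟨w, hw, z, hz⟩ := star _ hh
        refine ⟨W.mkQ z, ?_⟩
        rw [Submodule.mkQ_apply, Submodule.mapQ_apply, hz, ← Submodule.mkQ_apply, map_sub,
          Submodule.mkQ_apply _ w, (Submodule.Quotient.mk_eq_zero W).2 hw, sub_zero]
    rw [e, Finset.smul_sum]
    simp only [smul_smul]
    rw [h2 (fun j => ϖ * α j)]
    refine forall₂_congr fun j _ => ?_
    rw [pow_succ', mul_dvd_mul_iff_left hϖ]

end step

lemma extend_li {k V : Type*} [Field k] [AddCommGroup V] [Module k V] [Module.Finite k V]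
    {m : ℕ} (v : ℕ → V) (d : ℕ) (hd : m + d ≤ finrank k V)
    (hv : LinearIndependent k (fun j : Fin m => v j)) :
    ∃ v' : ℕ → V, (∀ j < m, v' j = v j) ∧
      LinearIndependent k (fun j : Fin (m + d) => v' j) := by
  induction d with
  | zero => exact ⟨v, fun _ _ => rfl, hv⟩
  | succ d ih =>
    obtain ⟨v', h1, h2⟩ := ih (by omega)
    obtain ⟨x, hx⟩ := exists_linearIndependent_snoc_of_lt_finrank h2 (by omega)
    refine ⟨fun j => if j < m + d then v' j else x, ?_, ?_⟩
    · intro j hj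
      rw [← h1 j hj]
      exact if_pos (by omega)
    · have : (fun j : Fin (m + d + 1) => if (j : ℕ) < m + d then v' j else x) =
          Fin.snoc (fun j : Fin (m + d) => v' j) x := ?_
      · rw [← this] at hx
        exact hx
      funext j
      refine Fin.lastCases ?_ (fun i => ?_) j
      · simp
      · simp

/-- bases lifting from the residue field -/
lemma lift_basis (W : Submodule A M) [Module.Finite A W] [Module.Free A W] {m m' : ℕ}
    (hm : finrank A W = m) (hm' : m' ≤ m) (w₀ : ℕ → M) (hw₀ : ∀ j < m', w₀ j ∈ W)
    (hli : ∀ α : ℕ → A, (∃ a ∈ maximalIdeal A, ∃ y ∈ W, ∑ j ∈ Finset.range m', α j • w₀ j = a • y) →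
      ∀ j < m', α j ∈ maximalIdeal A) :
    ∃ w : ℕ → M, (∀ j < m', w j = w₀ j) ∧ (∀ j, w j ∈ W) ∧
      (∀ x ∈ W, ∃ γ : ℕ → A, x = ∑ j ∈ Finset.range m, γ j • w j) ∧
      (∀ β γ : ℕ → A, ∑ j ∈ Finset.range m, β j • w j = ∑ j ∈ Finset.range m, γ j • w j →
        ∀ j < m, β j = γ j) := by
  obtain ⟨d, rfl⟩ := Nat.exists_eq_add_of_le hm'
  let w1 : ℕ → W := fun j => if h : j < m' then ⟨w₀ j, hw₀ j h⟩ else 0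
  have hw1 : ∀ j < m', (w1 j : M) = w₀ j := fun j hj => by simp [w1, hj]
  have hfr : finrank (ResidueField A) (ResidueField A ⊗[A] W) = m' + d := by
    rw [Module.finrank_baseChange, hm]
  obtain ⟨v, hv1, hv2⟩ := extend_li (k := ResidueField A) (m := m')
    (fun j => (1 : ResidueField A) ⊗ₜ[A] w1 j) d hfr.ge (by
      rw [Fintype.linearIndependent_iff]
      intro g hg
      choose α hα using fun i => residue_surjective (g i)
      have h0 : (1 : ResidueField A) ⊗ₜ[A] (∑ j : Fin m', α j • w1 j) = 0 := by
        rw [TensorProduct.tmul_sum, ← hg]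
        refine Finset.sum_congr rfl fun j _ => ?_
        rw [← hα j, TensorProduct.tmul_smul, TensorProduct.smul_tmul', TensorProduct.smul_tmul']
        congr 1
      rw [tmul_eq_zero_iff] at h0
      obtain ⟨a, ha, y, hy⟩ := h0
      have := hli (fun j => if h : j < m' then α ⟨j, h⟩ else 0) ⟨a, ha, y, y.2, by
        rw [Finset.sum_range]
        have := congrArg (Subtype.val) hy
        simp only [Submodule.coe_sum, Submodule.coe_smul] at this
        rw [← this]
        refine Finset.sum_congr rfl fun j _ => ?_
        rw [hw1 j j.2]
        simp⟩
      intro i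
      have := this i i.2
      rw [← hα i, residue_eq_zero_iff]
      simpa using this)
  choose w2 hw2 using fun j => exists_tmul (v j)
  let w : ℕ → W := fun j => if j < m' then w1 j else w2 j
  have hwv : ∀ j, j < m' + d → (1 : ResidueField A) ⊗ₜ[A] w j = v j := by
    intro j _
    by_cases hj : j < m'
    · simp [w, hj, hv1 j hj]
    · simp [w, hj, hw2 j]
  let B := basisOfLinearIndependentOfCardEqFinrank' _ hv2 (by rw [hfr, Fintype.card_fin])
  have hsp := IsLocalRing.span_eq_top_of_tmul_eq_basis (fun j : Fin (m' + d) => w j) B (by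
    intro i
    simp [B, hwv i i.2])
  have hind := linearIndependent_of_top_le_span_of_card_eq_finrank hsp.ge (by
    rw [hm, Fintype.card_fin])
  have hsum : ∀ γ : ℕ → A, ∑ j ∈ Finset.range (m' + d), γ j • (w j : M) =
      ((∑ j : Fin (m' + d), γ j • w j : W) : M) := by
    intro γ
    rw [Finset.sum_range]
    simp
  refine ⟨fun j => w j, ?_, fun j => (w j).2, ?_, ?_⟩
  · intro j hj
    simp only [w, if_pos hj, hw1 j hj]
  · intro x hx
    have : (⟨x, hx⟩ : W) ∈ Submodule.span A (Set.range fun j : Fin (m' + d) => w j) := by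
      rw [hsp]; trivial
    rw [Submodule.mem_span_range_iff_exists_fun] at this
    obtain ⟨c, hc⟩ := this
    refine ⟨fun j => if h : j < m' + d then c ⟨j, h⟩ else 0, ?_⟩
    rw [hsum]
    have := congrArg Subtype.val hc
    simpa using this.symm
  · intro β γ h j hj
    rw [hsum, hsum] at h
    have h' := Subtype.ext h
    rw [Fintype.linearIndependent_iff] at hind
    have := hind (fun j => β j - γ j) (by
      simp only [sub_smul, Finset.sum_sub_distrib, h', sub_self]) ⟨j, hj⟩
    exact sub_eq_zero.1 this

lemma bwd_eldiv {φ : Module.End A M} {ϖ : A} {W : Submodule A M}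
    [Module.Finite A W] [Module.Free A W] (hϖ : ϖ ≠ 0) (hϖm : ϖ ∈ maximalIdeal A) (u : Aˣ)
    (hsat : ∀ (a : A) (x : M), a ≠ 0 → a • x ∈ W → x ∈ W)
    (hu : ∀ x ∈ W, φ x = ((u : A) * ϖ) • x) (hle : W ≤ W.comap φ)
    (hW : ∀ x, φ x ∈ W → x ∈ W)
    (hker : ∀ x : M, (1 : ResidueField A) ⊗ₜ[A] (φ x) = 0 →
      (1 : ResidueField A) ⊗ₜ[A] (W.mkQ x) = 0)
    {m m' : ℕ} (hm : finrank A W = m) (hm' : m' ≤ m) {l : ℕ → ℕ}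
    (hl1 : ∀ j < m', 1 ≤ l j) (hl0 : ∀ j, m' ≤ j → l j = 0)
    (h : ElDiv (W.mapQ W φ hle) ϖ l m') :
    ElDiv φ ϖ (fun j => l j + 1) m := by
  obtain ⟨yN, h1, h2⟩ := h
  choose y₀ hy₀ using fun j => W.mkQ_surjective (yN j)
  obtain rfl : (fun j => W.mkQ (y₀ j)) = yN := funext hy₀
  clear hy₀
  have mk0 : ∀ x, W.mkQ x = 0 ↔ x ∈ W := fun x => Submodule.Quotient.mk_eq_zero W
  have mkφ : ∀ x, W.mapQ W φ hle (W.mkQ x) = W.mkQ (φ x) := fun x => rfl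
  have hz : ∀ j, ∃ z, j < m' → ϖ ^ l j • y₀ j - φ z ∈ W := by
    intro j
    by_cases hj : j < m'
    · have := (h2 (Pi.single j (ϖ ^ l j))).2 (by
        intro i hi
        by_cases hij : i = j
        · subst hij; simp
        · simp [hij])
      rw [Finset.sum_eq_single j] at this
      · obtain ⟨z, hz⟩ := this
        obtain ⟨z, rfl⟩ := W.mkQ_surjective z
        refine ⟨z, fun _ => ?_⟩
        rw [← mk0, map_sub, ← mkφ, hz]
        simp
      · intro i _ hij; simp [hij]
      · intro hj'; exact absurd (Finset.mem_range.2 hj) hj'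
    · exact ⟨0, fun h => absurd h hj⟩
  choose z₀ hz₀ using hz
  obtain ⟨w, hw1, hw2, hw3, hw4⟩ := lift_basis W hm hm' (fun j => ϖ ^ l j • y₀ j - φ (z₀ j)) hz₀ (by
    rintro α ⟨a, ha, t, ht, hsum⟩ i hi
    by_contra hαi
    simp only [smul_sub, Finset.sum_sub_distrib, ← map_smul, ← map_sum] at hsum
    set Z := ∑ j ∈ Finset.range m', α j • z₀ j with hZ
    have e1 : (1 : ResidueField A) ⊗ₜ[A] (φ Z) = 0 := by
      rw [tmul_eq_zero_iff, ← mem_m_smul, ← sub_sub_cancel (∑ j ∈ Finset.range m', α j • ϖ ^ l j • y₀ j) (φ Z)]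
      rw [hsum]
      refine sub_mem (Submodule.sum_mem _ fun j hj => Submodule.smul_mem _ _ ?_)
        (Submodule.smul_mem_smul ha trivial)
      refine Submodule.smul_mem_smul (Ideal.pow_mem_of_mem _ hϖm _ ?_) trivial
      exact hl1 j (Finset.mem_range.1 hj)
    have e2 := hker _ e1
    rw [tmul_eq_zero_iff] at e2
    obtain ⟨a', ha', t', ht'⟩ := e2
    obtain ⟨t', rfl⟩ := W.mkQ_surjective t'
    obtain ⟨b, ⟨d, hd⟩, hb⟩ := cofactor hϖ hϖm ha'
    have e3 : W.mkQ (∑ j ∈ Finset.range m', α j • ϖ ^ l j • y₀ j) = a' • W.mkQ (φ t') := by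
      have e4 : W.mkQ (φ Z) = a' • W.mkQ (φ t') := by
        rw [← mkφ, ht', map_smul, mkφ]
      rw [← e4, ← sub_eq_zero, ← map_sub, hsum, mk0]
      exact W.smul_mem _ ht
    have e5 : W.mkQ (∑ j ∈ Finset.range m', (b * α j * ϖ ^ (l j - 1)) • y₀ j) = W.mkQ (φ (d • t')) := by
      rw [← sub_eq_zero, ← map_sub, mk0]
      apply hsat ϖ _ hϖ
      rw [← mk0, map_smul, map_sub, smul_sub, map_smul, map_smul, smul_smul, ← hd, mul_comm a' b,
        mul_smul, ← e3, ← map_smul, ← map_smul, ← map_sub, Finset.smul_sum, Finset.smul_sum,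
        Finset.sum_congr rfl (g := fun j => b • α j • ϖ ^ l j • y₀ j), sub_self, map_zero]
      intro j hj
      have := hl1 j (Finset.mem_range.1 hj)
      obtain ⟨k, hk⟩ := Nat.exists_eq_add_of_le this
      simp only [smul_smul]
      congr 1
      rw [hk, Nat.add_sub_cancel_left, pow_add]
      ring
    have e6 := (h2 (fun j => b * α j * ϖ ^ (l j - 1))).1 (by
      simp only [← map_smul, ← map_sum]
      rw [e5, ← mkφ]
      exact ⟨_, rfl⟩) i hi
    obtain ⟨k, hk⟩ := Nat.exists_eq_add_of_le (hl1 i hi)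
    rw [hk, Nat.add_sub_cancel_left, pow_add, pow_one,
      mul_dvd_mul_iff_right (pow_ne_zero _ hϖ)] at e6
    rw [mem_maximalIdeal, mem_nonunits_iff, not_not] at hαi
    exact hb (hαi.dvd_mul_right.1 e6))
  let y : ℕ → M := fun j => if j < m' then y₀ j else w j
  let z : ℕ → M := fun j => if j < m' then z₀ j else 0
  have hyzw : ∀ j, ϖ ^ l j • y j = φ (z j) + w j := by
    intro j
    by_cases hj : j < m'
    · simp [y, z, hj, hw1 j hj]
    · simp [y, z, hj, hl0 j (by omega)]
  have hsumQ : ∀ α : ℕ → A, W.mkQ (∑ j ∈ Finset.range m, α j • y j) =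
      ∑ j ∈ Finset.range m', α j • W.mkQ (y₀ j) := by
    intro α
    obtain ⟨d, rfl⟩ := Nat.exists_eq_add_of_le hm'
    rw [Finset.sum_range_add, map_add, (mk0 (∑ x ∈ Finset.range d, _)).2, add_zero, map_sum]
    · refine Finset.sum_congr rfl fun j hj => ?_
      simp [y, Finset.mem_range.1 hj]
    · refine W.sum_mem fun j _ => W.smul_mem _ ?_
      simpa [y] using hw2 _
  refine ⟨y, ?_, ?_⟩
  · intro x
    obtain ⟨α, t, ht⟩ := h1 (W.mkQ x)
    obtain ⟨t, rfl⟩ := W.mkQ_surjective t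
    rw [mkφ, ← hsumQ, ← map_sub, eq_comm, ← sub_eq_zero, ← map_sub, mk0] at ht
    obtain ⟨β, hβ⟩ := hw3 _ ht
    refine ⟨fun j => α j + β j * ϖ ^ l j, t - ∑ j ∈ Finset.range m, β j • z j, ?_⟩
    have e : ∑ j ∈ Finset.range m, (α j + β j * ϖ ^ l j) • y j = ∑ j ∈ Finset.range m, α j • y j +
        (φ (∑ j ∈ Finset.range m, β j • z j) + ∑ j ∈ Finset.range m, β j • w j) := by
      rw [map_sum, ← Finset.sum_add_distrib, ← Finset.sum_add_distrib]
      refine Finset.sum_congr rfl fun j _ => ?_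
      rw [add_smul, mul_smul, hyzw, smul_add, map_smul]
    rw [e, ← hβ, map_sub]
    abel
  · intro α
    constructor
    · rintro ⟨x, hx⟩
      have e1 : ∀ j < m', ϖ ^ l j ∣ α j := by
        apply (h2 α).1
        rw [← hsumQ, ← hx, ← mkφ]
        exact ⟨_, rfl⟩
      have e2 : ∀ j, ∃ β, α j = ϖ ^ l j * β ∨ m ≤ j := by
        intro j
        by_cases hj : j < m'
        · obtain ⟨β, hβ⟩ := e1 j hj
          exact ⟨β, Or.inl hβ⟩
        · exact ⟨α j, Or.inl (by simp [hl0 j (by omega)])⟩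
      choose β hβ using e2
      have e3 : ∑ j ∈ Finset.range m, α j • y j =
        (φ (∑ j ∈ Finset.range m, β j • z j) + ∑ j ∈ Finset.range m, β j • w j) := by
        rw [map_sum, ← Finset.sum_add_distrib]
        refine Finset.sum_congr rfl fun j hj => ?_
        rcases hβ j with h | h
        · rw [h, mul_comm, mul_smul, hyzw, smul_add, map_smul]
        · exact absurd (Finset.mem_range.1 hj) (by omega)
      rw [← hx, ← sub_eq_iff_eq_add', ← map_sub] at e3
      have e4 : (x - ∑ j ∈ Finset.range m, β j • z j) ∈ W := by
        apply hW
        rw [e3]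
        exact W.sum_mem fun j _ => W.smul_mem _ (hw2 j)
      rw [hu _ e4] at e3
      obtain ⟨γ, hγ⟩ := hw3 _ e4
      rw [hγ, Finset.smul_sum] at e3
      simp only [smul_smul] at e3
      have e5 := hw4 _ _ e3
      intro j hj
      rcases hβ j with h | h
      · rw [h, ← e5 j hj]
        exact ⟨u * γ j, by ring⟩
      · omega
    · intro h
      refine Submodule.sum_mem _ fun j hj => ?_
      obtain ⟨c, hc⟩ := h j (Finset.mem_range.1 hj)
      refine ⟨c • (ϖ • z j + ((u⁻¹ : Aˣ) : A) • w j), ?_⟩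
      rw [hc, map_smul, map_add, map_smul, map_smul, hu _ (hw2 j), smul_smul, ← mul_assoc,
        Units.inv_mul, one_mul, ← smul_add, ← hyzw, smul_smul, smul_smul]
      congr 1
      ring


lemma ker_pow {k V V' : Type*} [Field k] [AddCommGroup V] [Module k V] [Module.Finite k V]
    [AddCommGroup V'] [Module k V'] [Module.Finite k V'] (f : Module.End k V) (g : Module.End k V')
    (q : V →ₗ[k] V') (hq : Function.Surjective q) (hc : ∀ x, q (f x) = g (q x))
    (hk : ∀ x, f x = 0 ↔ q x = 0) (i : ℕ) :
    finrank k (LinearMap.ker (f ^ (i + 1))) =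
      finrank k (LinearMap.ker (g ^ i)) + finrank k (LinearMap.ker q) := by
  have hci : ∀ x, q ((f ^ i) x) = (g ^ i) (q x) := by
    induction i with
    | zero => simp
    | succ i ih => intro x; rw [pow_succ, pow_succ, Module.End.mul_apply, Module.End.mul_apply, ih, hc]
  have e : LinearMap.ker (f ^ (i + 1)) = (LinearMap.ker (g ^ i)).comap q := by
    ext x
    rw [LinearMap.mem_ker, Submodule.mem_comap, LinearMap.mem_ker, ← hci, ← hk, pow_succ',
      Module.End.mul_apply]
  rw [e]
  have hle : LinearMap.ker q ≤ (LinearMap.ker (g ^ i)).comap q := by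
    intro x hx
    rw [LinearMap.mem_ker] at hx
    simp [hx]
  let q' : (LinearMap.ker (g ^ i)).comap q →ₗ[k] LinearMap.ker (g ^ i) :=
    q.restrict (fun x hx => hx)
  have h1 := LinearMap.finrank_range_add_finrank_ker q'
  have h2 : LinearMap.range q' = ⊤ := by
    rw [LinearMap.range_eq_top]
    rintro ⟨y, hy⟩
    obtain ⟨x, rfl⟩ := hq y
    exact ⟨⟨x, hy⟩, rfl⟩
  have h3 : finrank k (LinearMap.ker q') = finrank k (LinearMap.ker q) := by
    refine LinearEquiv.finrank_eq ?_
    have : LinearMap.ker q' = (LinearMap.ker q).comap ((LinearMap.ker (g ^ i)).comap q).subtype := by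
      ext x
      simp only [LinearMap.mem_ker, Submodule.mem_comap, Submodule.subtype_apply]
      rw [← Subtype.coe_inj]
      rfl
    rw [this]
    exact Submodule.comapSubtypeEquivOfLe hle
  rw [h2, finrank_top, h3] at h1
  exact h1.symm

theorem core {ϖ : A} (hϖ : ϖ ≠ 0) (hϖm : ϖ ∈ maximalIdeal A) (n : ℕ) :
    ∀ (M : Type w) [AddCommGroup M] [Module A M] [Module.Free A M] [Module.Finite A M]
      (φ : Module.End A M) (r : ℕ → ℕ) (W : ℕ → Submodule A M), IsFilt φ ϖ n r W → Antitone r →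
      (∀ i, n ≤ i → r i = 0) →
      (ElDiv φ ϖ (ell n r) (r 0) ↔ ∀ i < n,
        finrank (ResidueField A) (LinearMap.ker (φ.baseChange (ResidueField A) ^ (i + 1)))
          = finrank (ResidueField A) (LinearMap.ker (φ.baseChange (ResidueField A) ^ i)) + r i) := by
  induction n with
  | zero =>
    intro M _ _ _ _ φ r W hF hr h0
    refine ⟨fun _ i hi => absurd hi (by omega), fun _ => ⟨fun _ => 0, ?_, ?_⟩⟩
    · intro x
      have : x ∈ W 0 := by rw [hF.top]; trivial
      rw [hF.zero, Submodule.mem_bot] at this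
      exact ⟨0, by simp [this]⟩
    · intro α
      simp [h0 0 le_rfl]
  | succ n ih =>
    intro M _ _ _ _ φ r W hF hr h0
    have hle := hF.map_le (i := 1) (by omega)
    have hF' := hF.step hle
    have hsat := hF.sat 1
    obtain ⟨u, hu⟩ := hF.act 0 (by omega)
    replace hu : ∀ x ∈ W 1, φ x = ((u : A) * ϖ) • x := by
      intro x hx
      have := hu x hx
      rwa [hF.zero, Submodule.mem_bot, sub_eq_zero] at this
    have hinj := hF.inj hϖ
    have hinj' := hF'.inj hϖ
    have hW : ∀ x, φ x ∈ W 1 → x ∈ W 1 := by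
      intro x hx
      have := hinj' ((W 1).mkQ x) (by
        rw [Submodule.mkQ_apply, Submodule.mapQ_apply, Submodule.Quotient.mk_eq_zero]
        exact hx)
      rwa [Submodule.mkQ_apply, Submodule.Quotient.mk_eq_zero] at this
    have freeQ : Module.Free A (M ⧸ W 1) := by
      apply free_of_tf
      intro a x ha hx
      obtain ⟨x, rfl⟩ := (W 1).mkQ_surjective x
      rw [← map_smul, Submodule.mkQ_apply, Submodule.Quotient.mk_eq_zero] at hx
      rw [Submodule.mkQ_apply, Submodule.Quotient.mk_eq_zero]
      exact hsat a x ha hx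
    have finW : Module.Finite A (W 1) := by
      have := Module.finitePresentation_of_projective A (M ⧸ W 1)
      have := Module.FinitePresentation.fg_ker (W 1).mkQ (W 1).mkQ_surjective
      rw [Submodule.ker_mkQ] at this
      exact Module.Finite.of_fg this
    have freeW : Module.Free A (W 1) := by
      apply free_of_tf
      intro a x ha hx
      apply Subtype.ext
      have := congrArg Subtype.val hx
      rw [Submodule.coe_smul, Submodule.coe_zero] at this
      exact (smul_eq_zero.1 this).resolve_left ha
    have hrk0 : finrank A M = finrank A (M ⧸ W 1) + r 0 := by
      have := hF.rank 0 (by omega)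
      rw [← this]
      exact ((Submodule.quotEquivOfEqBot _ hF.zero).finrank_eq).symm
    have hrkW : finrank A (W 1) = r 0 := by
      have := (W 1).finrank_quotient_add_finrank
      omega
    -- ell
    have hell : ∀ j, j < r 0 → ell (n + 1) r j = ell n (fun i => r (i + 1)) j + 1 := by
      intro j hj
      rw [ell_succ, if_pos hj]
    have hell0 : ∀ j, r 1 ≤ j → ell n (fun i => r (i + 1)) j = 0 := by
      intro j hj
      refine Finset.sum_eq_zero fun i _ => if_neg ?_
      show ¬ j < r (i + 1)
      have := hr (show 1 ≤ i + 1 by omega)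
      omega
    have hell1 : ∀ j, j < r 1 → 1 ≤ ell n (fun i => r (i + 1)) j := by
      intro j hj
      have hn : 0 < n := by
        by_contra hn
        have := h0 1 (by omega)
        omega
      have := Finset.single_le_sum (f := fun i => if j < r (i + 1) then 1 else 0)
        (fun _ _ => Nat.zero_le _) (Finset.mem_range.2 hn)
      simp only [zero_add, if_pos hj] at this
      exact this
    have hcongr : ElDiv φ ϖ (ell (n + 1) r) (r 0) ↔
        ElDiv φ ϖ (fun j => ell n (fun i => r (i + 1)) j + 1) (r 0) := by
      unfold ElDiv
      refine exists_congr fun y => and_congr_right fun _ => forall_congr' fun α => ?_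
      refine iff_congr Iff.rfl (forall₂_congr fun j hj => ?_)
      rw [hell j hj]
    rw [hcongr]
    have IH := ih (M ⧸ W 1) _ _ _ hF' (fun i j hij => hr (by omega)) (fun i hi => h0 _ (by omega))
    -- base change
    let k := ResidueField A
    let q : k ⊗[A] M →ₗ[k] k ⊗[A] (M ⧸ W 1) := (W 1).mkQ.baseChange k
    have hq : Function.Surjective q := by
      intro x
      obtain ⟨x, rfl⟩ := exists_tmul x
      obtain ⟨x, rfl⟩ := (W 1).mkQ_surjective x
      exact ⟨1 ⊗ₜ x, rfl⟩
    have hqdim : finrank k (LinearMap.ker q) = r 0 := by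
      have h1 := LinearMap.finrank_range_add_finrank_ker q
      rw [LinearMap.range_eq_top.2 hq, finrank_top, Module.finrank_baseChange,
        Module.finrank_baseChange] at h1
      omega
    have hqc : ∀ x, q (φ.baseChange k x) = ((W 1).mapQ (W 1) φ hle).baseChange k (q x) := by
      intro x
      obtain ⟨x, rfl⟩ := exists_tmul x
      rfl
    have hkerq : LinearMap.ker q ≤ LinearMap.ker (φ.baseChange k) := by
      intro x hx
      obtain ⟨x, rfl⟩ := exists_tmul x
      exact kerq_le hϖm u hu x hx
    have main : (∀ x : M, (1 : k) ⊗ₜ[A] (φ x) = 0 → (1 : k) ⊗ₜ[A] ((W 1).mkQ x) = 0) →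
      ((∀ i < n, finrank k (LinearMap.ker (((W 1).mapQ (W 1) φ hle).baseChange k ^ (i + 1)))
          = finrank k (LinearMap.ker (((W 1).mapQ (W 1) φ hle).baseChange k ^ i)) + r (i + 1)) ↔
       (∀ i < n + 1, finrank k (LinearMap.ker (φ.baseChange k ^ (i + 1)))
          = finrank k (LinearMap.ker (φ.baseChange k ^ i)) + r i)) := by
      intro hker
      have hkk : ∀ x, φ.baseChange k x = 0 ↔ q x = 0 := by
        intro x
        refine ⟨fun hx => ?_, fun hx => hkerq hx⟩
        obtain ⟨x, rfl⟩ := exists_tmul x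
        exact hker x hx
      have hp := ker_pow (φ.baseChange k) (((W 1).mapQ (W 1) φ hle).baseChange k) q hq hqc hkk
      have z1 : finrank k (LinearMap.ker (φ.baseChange k ^ 0)) = 0 := by
        rw [pow_zero, Module.End.one_eq_id, LinearMap.ker_id, finrank_bot]
      have z2 : finrank k (LinearMap.ker (((W 1).mapQ (W 1) φ hle).baseChange k ^ 0)) = 0 := by
        rw [pow_zero, Module.End.one_eq_id, LinearMap.ker_id, finrank_bot]
      constructor
      · intro h i hi
        cases i with
        | zero => rw [hp, z1, z2, hqdim]
        | succ i => rw [hp, hp, h i (by omega)]; omega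
      · intro h i hi
        have := h (i + 1) (by omega)
        rw [hp, hp] at this
        omega
    constructor
    · intro h
      have star := star_of_eldiv hϖ hϖm u hu hW
        (Module.finBasisOfFinrankEq A (W 1) hrkW) h
      have hker := fun x => ker_of_star hϖ u hsat hu hinj star x hϖm
      rw [← main hker, ← IH]
      have h2 := fwd_eldiv hϖ u hu hle star h
      have h3 : r 1 ≤ r 0 := hr (by omega)
      obtain ⟨d, hd⟩ := Nat.exists_eq_add_of_le h3
      rw [hd] at h2
      exact ElDiv.drop hell0 h2
    · intro h
      have hker : ∀ x : M, (1 : k) ⊗ₜ[A] (φ x) = 0 → (1 : k) ⊗ₜ[A] ((W 1).mkQ x) = 0 := by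
        have h1 := h 0 (by omega)
        rw [pow_zero, Module.End.one_eq_id, LinearMap.ker_id, finrank_bot, zero_add, zero_add,
          pow_one] at h1
        have h2 := Submodule.eq_of_le_of_finrank_eq hkerq (by rw [hqdim]; exact h1.symm)
        intro x hx
        have : (1 : k) ⊗ₜ[A] x ∈ LinearMap.ker q := by
          rw [h2]; exact hx
        exact this
      have h2 := IH.2 ((main hker).2 h)
      exact bwd_eldiv hϖ hϖm u hsat hu hle hW hker hrkW (hr (by omega)) hell1 hell0 h2


lemma eldiv_iff {φ : Module.End A M} {ϖ : A} {l : ℕ → ℕ} {N : ℕ} (c : Fin N → A)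
    (hc : ∀ j α, c j ∣ α ↔ ϖ ^ l j ∣ α) :
    ElDiv φ ϖ l N ↔
      Nonempty ((M ⧸ LinearMap.range φ) ≃ₗ[A] ((j : Fin N) → A ⧸ Ideal.span {c j})) := by
  constructor
  · rintro ⟨y, h1, h2⟩
    let f : (Fin N → A) →ₗ[A] (M ⧸ LinearMap.range φ) :=
      Fintype.linearCombination A (fun j : Fin N => (LinearMap.range φ).mkQ (y j))
    have hf : ∀ α : ℕ → A, f (fun j => α j) =
        (LinearMap.range φ).mkQ (∑ j ∈ Finset.range N, α j • y j) := by
      intro α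
      simp only [f, Fintype.linearCombination_apply, Finset.sum_range, map_sum, map_smul]
    have hext : ∀ α : Fin N → A, ∃ α' : ℕ → A, (fun j : Fin N => α' j) = α := by
      intro α
      exact ⟨fun j => if h : j < N then α ⟨j, h⟩ else 0, by funext j; simp⟩
    have hfs : Function.Surjective f := by
      intro x
      obtain ⟨x, rfl⟩ := (LinearMap.range φ).mkQ_surjective x
      obtain ⟨α, hα⟩ := h1 x
      refine ⟨fun j => α j, ?_⟩
      rw [hf, eq_comm, ← sub_eq_zero, ← map_sub]
      exact (Submodule.Quotient.mk_eq_zero _).2 hα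
    have hfk : LinearMap.ker f = Submodule.pi Set.univ (fun j : Fin N => Ideal.span {c j}) := by
      ext α
      obtain ⟨α, rfl⟩ := hext α
      rw [LinearMap.mem_ker, hf, Submodule.mkQ_apply, Submodule.Quotient.mk_eq_zero, h2]
      simp only [Submodule.mem_pi, Set.mem_univ, true_imp_iff, Ideal.mem_span_singleton, hc]
      exact ⟨fun h j => h j j.2, fun h j hj => h ⟨j, hj⟩⟩
    exact ⟨(f.quotKerEquivOfSurjective hfs).symm.trans
      ((Submodule.quotEquivOfEq _ _ hfk).trans (Submodule.quotientPi _))⟩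
  · rintro ⟨Ψ⟩
    choose y hy using fun j : Fin N => (LinearMap.range φ).mkQ_surjective
      (Ψ.symm (Pi.single j (Ideal.Quotient.mk _ 1)))
    let y' : ℕ → M := fun j => if h : j < N then y ⟨j, h⟩ else 0
    have key : ∀ α : ℕ → A, Ψ ((LinearMap.range φ).mkQ (∑ j ∈ Finset.range N, α j • y' j)) =
        fun j : Fin N => Ideal.Quotient.mk (Ideal.span {c j}) (α j) := by
      intro α
      rw [Finset.sum_range]
      simp only [y', map_sum, map_smul, Fin.is_lt, dite_true, Fin.eta, hy, LinearEquiv.apply_symm_apply]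
      funext i
      rw [Finset.sum_apply, Finset.sum_eq_single i]
      · rw [Pi.smul_apply, Pi.single_eq_same, Algebra.smul_def]
        simp
      · intro j _ hj
        rw [Pi.smul_apply, Pi.single_eq_of_ne (Ne.symm hj), smul_zero]
      · simp
    refine ⟨y', ?_, ?_⟩
    · intro x
      choose α hα using fun j : Fin N =>
        Ideal.Quotient.mk_surjective (Ψ ((LinearMap.range φ).mkQ x) j)
      refine ⟨fun j => if h : j < N then α ⟨j, h⟩ else 0, ?_⟩
      rw [← Submodule.Quotient.mk_eq_zero, ← Submodule.mkQ_apply, map_sub, sub_eq_zero]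
      apply Ψ.injective
      rw [key]
      funext j
      simp [hα]
    · intro α
      rw [← Submodule.Quotient.mk_eq_zero, ← Submodule.mkQ_apply, ← Ψ.map_eq_zero_iff, key,
        funext_iff]
      simp only [Pi.zero_apply, Ideal.Quotient.eq_zero_iff_mem, Ideal.mem_span_singleton, hc]
      exact ⟨fun h j hj => h ⟨j, hj⟩, fun h j => h j j.2⟩

section filt
variable {K : Type*} [Field K] [Algebra A K] [IsFractionRing A K]

lemma rank_comap (U : Submodule K (K ⊗[A] M)) :
    finrank A (M ⧸ (U.restrictScalars A).comap (TensorProduct.mk A K M 1)) =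
      finrank K ((K ⊗[A] M) ⧸ U) := by
  set W := (U.restrictScalars A).comap (TensorProduct.mk A K M 1) with hWdef
  let g : M →ₗ[A] ((K ⊗[A] M) ⧸ U) := (U.mkQ.restrictScalars A) ∘ₗ TensorProduct.mk A K M 1
  have hg : ∀ x, g x = 0 ↔ x ∈ W := by
    intro x
    exact Submodule.Quotient.mk_eq_zero U
  let f : (M ⧸ W) →ₗ[A] ((K ⊗[A] M) ⧸ U) := W.liftQ g (fun x hx => (hg x).2 hx)
  have hf : ∀ x, f (W.mkQ x) = g x := fun x => rfl
  have hloc : IsLocalizedModule (nonZeroDivisors A) f := by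
    refine ⟨?_, ?_, ?_⟩
    · intro s
      have h1 : IsUnit (algebraMap A K s) := IsLocalization.map_units K s
      have h2 := h1.map (Algebra.lsmul A A ((K ⊗[A] M) ⧸ U) : K →ₐ[A] _)
      rwa [AlgHom.commutes] at h2
    · intro y
      obtain ⟨y, rfl⟩ := U.mkQ_surjective y
      obtain ⟨⟨m, s⟩, hs⟩ := IsLocalizedModule.surj (nonZeroDivisors A) (TensorProduct.mk A K M 1) y
      refine ⟨(W.mkQ m, s), ?_⟩
      rw [hf]
      simp only [g, LinearMap.comp_apply]
      rw [← hs]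
      rfl
    · intro x y hxy
      obtain ⟨x, rfl⟩ := W.mkQ_surjective x
      obtain ⟨y, rfl⟩ := W.mkQ_surjective y
      refine ⟨1, ?_⟩
      rw [hf, hf, ← sub_eq_zero, ← map_sub, hg] at hxy
      rw [one_smul, one_smul, ← sub_eq_zero, ← map_sub]
      exact (Submodule.Quotient.mk_eq_zero W).2 hxy
  rw [IsLocalization.finrank_eq K (nonZeroDivisors A) le_rfl (N := (K ⊗[A] M) ⧸ U)]
  exact (IsLocalizedModule.finrank_eq (nonZeroDivisors A) f le_rfl).symm

lemma build_filt [Module.Free A M] [Module.Finite A M] (φ : Module.End A M) (ϖ : A) (n : ℕ)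
    (r : ℕ → ℕ) (E : ℕ → Submodule K (K ⊗[A] M)) (c : ℕ → A)
    (hE : ∀ i < n, ∀ x ∈ E i, φ.baseChange K x = algebraMap A K (c i) • x)
    (hc : ∀ i < n, ∃ u : Aˣ, c i = u * ϖ)
    (hfin : ∀ i < n, finrank K (E i) ≤ r i) (hsup : (Finset.range n).sup E = ⊤)
    (hsum : ∑ i ∈ Finset.range n, r i = finrank A M) :
    ∃ W : ℕ → Submodule A M, IsFilt φ ϖ n r W := by
  let U : ℕ → Submodule K (K ⊗[A] M) := fun k => (Finset.range k).sup E
  have hU : ∀ k, U (k + 1) = E k ⊔ U k := fun k => by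
    simp only [U, Finset.range_add_one, Finset.sup_insert]
  have hD : finrank K (K ⊗[A] M) = ∑ i ∈ Finset.range n, r i := by
    rw [hsum, Module.finrank_baseChange]
  have hd1 : ∀ k < n, finrank K (U (k + 1)) ≤ finrank K (U k) + r k := by
    intro k hk
    rw [hU]
    have := Submodule.finrank_add_le_finrank_add_finrank (E k) (U k)
    have := hfin k hk
    omega
  have hd0 : finrank K (U 0) = 0 := by
    have h0 : U 0 = ⊥ := by simp [U]
    rw [h0, finrank_bot]
  have hdn : finrank K (U n) = ∑ i ∈ Finset.range n, r i := by
    rw [← hD]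
    have hn : U n = ⊤ := hsup
    rw [hn, finrank_top]
  have hdk : ∀ k ≤ n, finrank K (U k) ≤ ∑ i ∈ Finset.range k, r i := by
    intro k
    induction k with
    | zero => simp [hd0]
    | succ k ih =>
      intro hk
      have := ih (by omega)
      have := hd1 k (by omega)
      rw [Finset.sum_range_succ]
      omega
  have hdk' : ∀ k ≤ n, finrank K (U n) + ∑ i ∈ Finset.range (n - k), r i ≤
      finrank K (U (n - k)) + ∑ i ∈ Finset.range n, r i := by
    intro k
    induction k with
    | zero => simp
    | succ k ih =>
      intro hk
      have h1 := ih (by omega)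
      have h2 := hd1 (n - (k + 1)) (by omega)
      have h3 : n - k = n - (k + 1) + 1 := by omega
      rw [h3, Finset.sum_range_succ] at h1
      omega
  have hd : ∀ k ≤ n, finrank K (U k) = ∑ i ∈ Finset.range k, r i := by
    intro k hk
    have h1 := hdk k hk
    have h2 := hdk' (n - k) (by omega)
    rw [show n - (n - k) = k by omega] at h2
    omega
  have hEφ : ∀ k ≤ n, ∀ x ∈ U k, φ.baseChange K x ∈ U k := by
    intro k
    induction k with
    | zero => intro _ x hx; simp [U] at hx ⊢; simp [hx]
    | succ k ih =>
      intro hk x hx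
      rw [hU] at hx ⊢
      obtain ⟨y, hy, z, hz, rfl⟩ := Submodule.mem_sup.1 hx
      rw [map_add, hE k (by omega) y hy]
      exact Submodule.add_mem_sup (Submodule.smul_mem _ _ hy) (ih (by omega) z hz)
  refine ⟨fun k => ((U k).restrictScalars A).comap (TensorProduct.mk A K M 1), ?_, ?_, ?_, ?_, ?_, ?_⟩
  · rw [eq_bot_iff]
    intro x hx
    have hx : (1 : K) ⊗ₜ[A] x = 0 := by simpa [U] using hx
    have hinj : Function.Injective (TensorProduct.mk A K M 1) := by
      apply Module.Flat.tensorProduct_mk_injective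
    rw [Submodule.mem_bot]
    apply hinj
    rw [map_zero]
    exact hx
  · rw [eq_top_iff]
    intro x _
    simp [U, hsup]
  · intro i j hij x hx
    have : U i ≤ U j := Finset.sup_mono (Finset.range_mono hij)
    exact this hx
  · intro i a x ha hx
    have h1 : (1 : K) ⊗ₜ[A] (a • x) ∈ U i := hx
    show (1 : K) ⊗ₜ[A] x ∈ U i
    have ha' : algebraMap A K a ≠ 0 := by
      simpa using ha
    have := (U i).smul_mem (algebraMap A K a)⁻¹ h1
    rw [TensorProduct.tmul_smul, ← algebraMap_smul K a, smul_smul, inv_mul_cancel₀ ha',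
      one_smul] at this
    exact this
  · intro i hi
    obtain ⟨u, hu⟩ := hc i hi
    refine ⟨u, ?_⟩
    intro x hx
    have h1 : (1 : K) ⊗ₜ[A] x ∈ U (i + 1) := hx
    show (1 : K) ⊗ₜ[A] (φ x - ((u : A) * ϖ) • x) ∈ U i
    rw [← hu, TensorProduct.tmul_sub, TensorProduct.tmul_smul, ← LinearMap.baseChange_tmul,
      ← algebraMap_smul K (c i)]
    generalize (1 : K) ⊗ₜ[A] x = t at h1
    rw [hU] at h1
    obtain ⟨y, hy, z, hz, rfl⟩ := Submodule.mem_sup.1 h1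
    rw [map_add, smul_add, hE i hi y hy, add_sub_add_left_eq_sub]
    exact sub_mem (hEφ i hi.le z hz) ((U i).smul_mem _ hz)
  · intro i hi
    rw [rank_comap, rank_comap]
    have h1 := (U i).finrank_quotient_add_finrank
    have h2 := (U (i + 1)).finrank_quotient_add_finrank
    have h3 := hd i hi.le
    have h4 := hd (i + 1) hi
    rw [Finset.sum_range_succ] at h4
    omega

end filt

lemma matching {X Y : Type*} [Fintype X] [Fintype Y] (f : X → ℕ) (g : Y → ℕ)
    (h : ∀ k, 1 ≤ k → (Finset.univ.filter fun x => k ≤ f x).card =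
      (Finset.univ.filter fun y => k ≤ g y).card) :
    ∃ σ : {x // 0 < f x} ≃ {y // 0 < g y}, ∀ x, g (σ x) = f x := by
  classical
  have hfib : ∀ k, 1 ≤ k → (Finset.univ.filter fun x => f x = k).card =
      (Finset.univ.filter fun y => g y = k).card := by
    intro k hk
    have h1 : ∀ {Z : Type _} [Fintype Z] (f : Z → ℕ),
        (Finset.univ.filter fun x => k ≤ f x).card = (Finset.univ.filter fun x => f x = k).card +
          (Finset.univ.filter fun x => k + 1 ≤ f x).card := by
      intro Z _ f
      rw [← Finset.card_union_of_disjoint]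
      · congr 1
        ext x
        simp
        omega
      · rw [Finset.disjoint_filter]
        intro x _ hx
        omega
    have h1' : ∀ {Z : Type _} [Fintype Z] (f : Z → ℕ),
        (Finset.univ.filter fun x => k ≤ f x).card = (Finset.univ.filter fun x => f x = k).card +
          (Finset.univ.filter fun x => k + 1 ≤ f x).card := by
      intro Z _ f
      rw [← Finset.card_union_of_disjoint]
      · congr 1
        ext x
        simp
        omega
      · rw [Finset.disjoint_filter]
        intro x _ hx
        omega
    have h2 := h1 f
    have h3 := h1' g
    have h4 := h k hk
    have h5 := h (k + 1) (by omega)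
    omega
  have hne : ∀ k, Nonempty ({x : {x // 0 < f x} // f x = k} ≃ {y : {y // 0 < g y} // g y = k}) := by
    intro k
    by_cases hk : 1 ≤ k
    · have e1 : {x : {x // 0 < f x} // f x = k} ≃ {x // f x = k} :=
        Equiv.subtypeSubtypeEquivSubtype (p := fun x => 0 < f x) (q := fun x => f x = k)
          (fun {x} hx => by omega)
      have e2 : {y : {y // 0 < g y} // g y = k} ≃ {y // g y = k} :=
        Equiv.subtypeSubtypeEquivSubtype (p := fun x => 0 < g x) (q := fun x => g x = k)
          (fun {x} hx => by omega)
      have : Fintype.card {x // f x = k} = Fintype.card {y // g y = k} := by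
        rw [Fintype.card_subtype, Fintype.card_subtype]
        exact hfib k hk
      exact ⟨e1.trans ((Fintype.equivOfCardEq this).trans e2.symm)⟩
    · have : IsEmpty {x : {x // 0 < f x} // f x = k} := ⟨fun x => by
        have := x.2; have := x.1.2; omega⟩
      have : IsEmpty {x : {x // 0 < g x} // g x = k} := ⟨fun x => by
        have := x.2; have := x.1.2; omega⟩
      exact ⟨Equiv.equivOfIsEmpty _ _⟩
  let e := fun k => Classical.choice (hne k)
  let σ := (Equiv.sigmaFiberEquiv (fun x : {x // 0 < f x} => f x)).symm.trans
    ((Equiv.sigmaCongrRight e).trans (Equiv.sigmaFiberEquiv (fun y : {y // 0 < g y} => g y)))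
  refine ⟨σ, fun x => ?_⟩
  exact (e (f x) ⟨x, rfl⟩).2


end S7

theorem statement7
    -- the complete rank-one valued field `(K, v)` extending `ℚ_p`, with valuation ring `O_K = A`
    -- and residue field `κ`
    {p : ℕ} [Fact p.Prime] {K : Type*} [Field K] [Algebra ℚ_[p] K]
    (v : K → ℝ)
    (hv_mul : ∀ x y : K, x ≠ 0 → y ≠ 0 → v (x * y) = v x + v y)
    (hv_add : ∀ x y : K, x ≠ 0 → y ≠ 0 → x + y ≠ 0 → min (v x) (v y) ≤ v (x + y))
    (hv_p : v (p : K) = 1)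
    (A : ValuationSubring K)
    (hA : ∀ x : K, x ≠ 0 → (x ∈ A ↔ 0 ≤ v x))
    -- the finite extension `F` of `ℚ_p`, its ring of integers `O_F`, uniformiser `π`,
    -- ramification index `e`; `K` contains a Galois closure of `F|ℚ_p`
    {F : Type*} [Field F] [Algebra ℚ_[p] F] [FiniteDimensional ℚ_[p] F]
    [Fintype (F →ₐ[ℚ_[p]] K)] [DecidableEq (F →ₐ[ℚ_[p]] K)]
    (OF : Subring F) (π : OF) (e : ℕ) (he : 0 < e)
    (hπe : ∃ u : OFˣ, (π : F) ^ e = (p : F) * ((u : OF) : F))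
    (hτO : ∀ (τ : F →ₐ[ℚ_[p]] K) (x : OF), τ (x : F) ∈ A)
    (hτπ : ∀ τ : F →ₐ[ℚ_[p]] K, v (τ (π : F)) = 1 / e)
    -- the finitely generated free `O_K`-module `M` of rank `r`, with `O_F`-action `ι`,
    -- and the eigenspace decomposition `M_K = ⊕_τ M_{K,τ}`
    {M : Type*} [AddCommGroup M] [Module A M] [Module.Free A M] [Module.Finite A M]
    (ι : OF →+* Module.End A M)
    (hdec : DirectSum.IsInternal (fun τ : F →ₐ[ℚ_[p]] K => eigenspaceOF A OF ι τ))
    (r : ℕ) (hrank : Module.finrank A M = r)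
    -- at most `e` of the embeddings `τ` satisfy `M_{K,τ} ≠ 0`
    (hsupp : ∃ T : Finset (F →ₐ[ℚ_[p]] K), T.card ≤ e ∧
      ∀ τ ∉ T, eigenspaceOF A OF ι τ = ⊥)
    -- `r_1 ≥ … ≥ r_e ≥ 0` is the decreasing rearrangement of `(r_τ)_τ`, padded with zeros
    (r' : Fin e → ℕ)
    (hr'anti : ∀ i j : Fin e, i ≤ j → r' j ≤ r' i)
    (hr'count : ∀ k : ℕ, 1 ≤ k →
      (Finset.univ.filter fun i : Fin e => k ≤ r' i).card
        = (Finset.univ.filter fun τ : F →ₐ[ℚ_[p]] K =>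
            k ≤ Module.finrank K (eigenspaceOF A OF ι τ)).card)
    (hrsum : r = ∑ i, r' i) :
    -- (i) the elementary divisors `c_j` of `M/ι(π)(M)` satisfy
    --     `v(c_j) = (1/e)·#{1 ≤ i ≤ e : r_i ≥ j}` for all `1 ≤ j ≤ r`, if and only if
    -- (ii) `dim_κ (M̄[π^j]/M̄[π^{j-1}]) = r_j` for all `1 ≤ j ≤ e`, where `M̄ = M ⊗ κ`
    ((∃ c : Fin r → A, (∀ j, c j ≠ 0) ∧
        Nonempty ((M ⧸ LinearMap.range (ι π)) ≃ₗ[A] ((j : Fin r) → A ⧸ Ideal.span {c j})) ∧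
        ∀ j : Fin r, v ((c j : A) : K)
          = ((Finset.univ.filter fun i : Fin e => (j : ℕ) + 1 ≤ r' i).card : ℝ) / e)
      ↔
      (∀ i : Fin e,
        Module.finrank (IsLocalRing.ResidueField A)
          (LinearMap.ker ((ι π).baseChange (IsLocalRing.ResidueField A) ^ ((i : ℕ) + 1)))
        = Module.finrank (IsLocalRing.ResidueField A)
            (LinearMap.ker ((ι π).baseChange (IsLocalRing.ResidueField A) ^ (i : ℕ)))
          + r' i)) := by
  classical
  have hfinK : Module.finrank K (K ⊗[A] M) = r := by
    rw [Module.finrank_baseChange, hrank]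
  have htop := hdec.submodule_iSup_eq_top
  rcases isEmpty_or_nonempty (F →ₐ[ℚ_[p]] K) with hemp | ⟨⟨τ₀⟩⟩
  · rw [iSup_of_empty] at htop
    have hr0 : r = 0 := by
      rw [← hfinK, ← finrank_top K, ← htop, finrank_bot]
    subst hr0
    have hM : Subsingleton M := Module.finrank_zero_iff.1 hrank
    have hr'0 : ∀ i, r' i = 0 := by
      intro i
      have := Finset.single_le_sum (f := r') (fun i _ => Nat.zero_le _) (Finset.mem_univ i)
      omega
    have hsubT : Subsingleton (IsLocalRing.ResidueField A ⊗[A] M) := inferInstance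
    constructor
    · intro _ i
      rw [hr'0, Module.finrank_zero_of_subsingleton, Module.finrank_zero_of_subsingleton]
    · intro _
      have : Subsingleton (M ⧸ LinearMap.range (ι π)) :=
        (Submodule.mkQ_surjective (LinearMap.range (ι π))).subsingleton
      exact ⟨fun j => j.elim0, fun j => j.elim0, ⟨LinearEquiv.ofSubsingleton _ _⟩,
        fun j => j.elim0⟩
  have he0 : (0 : ℝ) < e := by exact_mod_cast he
  have hpF : (p : F) ≠ 0 := by
    have : CharZero F := charZero_of_injective_algebraMap (algebraMap ℚ_[p] F).injective
    exact_mod_cast (Fact.out : p.Prime).ne_zero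
  have hπ0 : (π : F) ≠ 0 := by
    intro h0
    obtain ⟨u, hu⟩ := hπe
    rw [h0, zero_pow he.ne'] at hu
    have hu' : ((u : OF) : F) ≠ 0 := by
      have := u.ne_zero
      exact_mod_cast this
    exact mul_ne_zero hpF hu' hu.symm
  have hτ0 : ∀ τ : F →ₐ[ℚ_[p]] K, τ (π : F) ≠ 0 := fun τ h =>
    hπ0 (τ.toRingHom.injective (by simpa using h))
  have hv1 : v 1 = 0 := by
    have := hv_mul 1 1 one_ne_zero one_ne_zero
    rw [mul_one] at this
    linarith
  have hvpow : ∀ (x : K), x ≠ 0 → ∀ n : ℕ, v (x ^ n) = n * v x := by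
    intro x hx n
    induction n with
    | zero => simp [hv1]
    | succ n ih =>
      rw [pow_succ, hv_mul _ _ (pow_ne_zero n hx) hx, ih]
      push_cast
      ring
  have hdvd : ∀ x y : A, x ≠ 0 → y ≠ 0 → v (x : K) ≤ v (y : K) → x ∣ y := by
    intro x y hx hy hxy
    have hx' : (x : K) ≠ 0 := by exact_mod_cast hx
    have hy' : (y : K) ≠ 0 := by exact_mod_cast hy
    have hq : (y : K) / x ≠ 0 := div_ne_zero hy' hx'
    have hm : (x : K) * (y / x) = y := mul_div_cancel₀ _ hx'
    have h1 := hv_mul _ _ hx' hq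
    rw [hm] at h1
    have h2 : (y : K) / x ∈ A := (hA _ hq).2 (by linarith)
    exact ⟨⟨_, h2⟩, Subtype.ext hm.symm⟩
  have hassoc : ∀ x y : A, x ≠ 0 → y ≠ 0 → v (x : K) = v (y : K) → Associated x y :=
    fun x y hx hy h => associated_of_dvd_dvd (hdvd x y hx hy h.le) (hdvd y x hy hx h.ge)
  let P : (F →ₐ[ℚ_[p]] K) → A := fun τ => ⟨τ (π : F), hτO τ π⟩
  have hP0 : ∀ τ, P τ ≠ 0 := fun τ h => hτ0 τ (congrArg Subtype.val h)
  have hPv : ∀ τ, v ((P τ : A) : K) = 1 / e := hτπ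
  let ϖ : A := P τ₀
  have hϖ0 : ϖ ≠ 0 := hP0 τ₀
  have hϖK : (ϖ : K) ≠ 0 := hτ0 τ₀
  have hϖv : v (ϖ : K) = 1 / e := hPv τ₀
  have hϖm : ϖ ∈ IsLocalRing.maximalIdeal A := by
    rw [IsLocalRing.mem_maximalIdeal, mem_nonunits_iff]
    intro hu
    obtain ⟨b, hb⟩ := hu.exists_right_inv
    have hb' : (ϖ : K) * b = 1 := congrArg Subtype.val hb
    have hb0 : (b : K) ≠ 0 := right_ne_zero_of_mul_eq_one hb'
    have h1 := hv_mul _ _ hϖK hb0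
    rw [hb', hv1, hϖv] at h1
    have h2 := (hA _ hb0).1 b.2
    have : (0 : ℝ) < 1 / e := by positivity
    linarith
  obtain ⟨σ, hσ⟩ := S7.matching r' (fun τ => Module.finrank K (eigenspaceOF A OF ι τ)) hr'count
  let rr : ℕ → ℕ := fun i => if h : i < e then r' ⟨i, h⟩ else 0
  have hrr : ∀ i : Fin e, rr i = r' i := fun i => by simp [rr]
  have hrr0 : ∀ i, e ≤ i → rr i = 0 := fun i hi => by simp [rr, Nat.not_lt.2 hi]
  have hrranti : Antitone rr := by
    intro i j hij
    by_cases hj : j < e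
    · have := hr'anti ⟨i, by omega⟩ ⟨j, hj⟩ hij
      rw [← hrr, ← hrr] at this
      exact this
    · rw [hrr0 j (by omega)]
      exact Nat.zero_le _
  have hrrsum : ∑ i ∈ Finset.range e, rr i = r := by
    rw [Finset.sum_range, hrsum]
    exact Finset.sum_congr rfl fun i _ => hrr i
  let T : ℕ → (F →ₐ[ℚ_[p]] K) := fun i =>
    if h : ∃ h : i < e, 0 < r' ⟨i, h⟩ then (σ ⟨⟨i, h.1⟩, h.2⟩ : F →ₐ[ℚ_[p]] K) else τ₀
  let E : ℕ → Submodule K (K ⊗[A] M) := fun i =>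
    if 0 < rr i then eigenspaceOF A OF ι (T i) else ⊥
  have hT : ∀ (i : Fin e) (h : 0 < r' i), T i = σ ⟨i, h⟩ := by
    intro i h
    have : ∃ h : (i : ℕ) < e, 0 < r' ⟨i, h⟩ := ⟨i.2, h⟩
    simp only [T, dif_pos this]
  have hfilt : ∃ W : ℕ → Submodule A M, S7.IsFilt (ι π) ϖ e rr W := by
    refine S7.build_filt (K := K) (ι π) ϖ e rr E (fun i => P (T i)) ?_ ?_ ?_ ?_ ?_
    · intro i hi x hx
      by_cases h : 0 < rr i
      · simp only [E, if_pos h, eigenspaceOF, Submodule.mem_iInf] at hx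
        have h1 := hx π
        rw [LinearMap.mem_ker, LinearMap.sub_apply, sub_eq_zero] at h1
        exact h1
      · simp only [E, if_neg h, Submodule.mem_bot] at hx
        rw [hx, map_zero, smul_zero]
    · intro i hi
      obtain ⟨u, hu⟩ := hassoc ϖ (P (T i)) hϖ0 (hP0 _) (by rw [hϖv, hPv])
      exact ⟨u, by rw [← hu, mul_comm]⟩
    · intro i hi
      by_cases h : 0 < rr i
      · have h' : 0 < r' ⟨i, hi⟩ := by rw [← hrr]; exact h
        have h1 : E i = eigenspaceOF A OF ι (σ ⟨⟨i, hi⟩, h'⟩ : F →ₐ[ℚ_[p]] K) := by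
          simp only [E, if_pos h]
          rw [← hT ⟨i, hi⟩ h']
        rw [h1]
        have h2 := hσ ⟨⟨i, hi⟩, h'⟩
        have h3 := hrr ⟨i, hi⟩
        exact (h2.trans h3.symm).le
      · have h1 : E i = ⊥ := by simp only [E, if_neg h]
        rw [h1, finrank_bot]
        exact Nat.zero_le _
    · rw [eq_top_iff, ← htop, iSup_le_iff]
      intro τ
      by_cases h : 0 < Module.finrank K (eigenspaceOF A OF ι τ)
      · obtain ⟨⟨i, hi⟩, hiτ⟩ := σ.surjective ⟨τ, h⟩
        have h1 : E i = eigenspaceOF A OF ι τ := by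
          have : 0 < rr i := by rw [hrr]; exact hi
          simp only [E, if_pos this]
          rw [hT i hi, hiτ]
        rw [← h1]
        exact Finset.le_sup (f := E) (Finset.mem_range.2 i.2)
      · have h0 : eigenspaceOF A OF ι τ = ⊥ :=
          Submodule.finrank_eq_zero.1 (by omega)
        rw [h0]
        exact bot_le
    · rw [hrrsum, hrank]
  obtain ⟨W, hW⟩ := hfilt
  have hcore := S7.core hϖ0 hϖm e M (ι π) rr W hW hrranti hrr0
  have hii : (∀ i < e,
        Module.finrank (IsLocalRing.ResidueField A)
          (LinearMap.ker ((ι π).baseChange (IsLocalRing.ResidueField A) ^ (i + 1)))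
        = Module.finrank (IsLocalRing.ResidueField A)
            (LinearMap.ker ((ι π).baseChange (IsLocalRing.ResidueField A) ^ i))
          + rr i) ↔ (∀ i : Fin e,
        Module.finrank (IsLocalRing.ResidueField A)
          (LinearMap.ker ((ι π).baseChange (IsLocalRing.ResidueField A) ^ ((i : ℕ) + 1)))
        = Module.finrank (IsLocalRing.ResidueField A)
            (LinearMap.ker ((ι π).baseChange (IsLocalRing.ResidueField A) ^ (i : ℕ)))
          + r' i) := by
    constructor
    · intro h i
      rw [h i i.2, hrr]
    · intro h i hi
      have := h ⟨i, hi⟩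
      rw [← hrr] at this
      exact this
  rw [← hii, ← hcore]
  have hell : ∀ j, rr 0 ≤ j → S7.ell e rr j = 0 := by
    intro j hj
    unfold S7.ell
    refine Finset.sum_eq_zero fun i _ => ?_
    have := hrranti (Nat.zero_le i)
    rw [if_neg (by omega)]
  have hcard : ∀ j : ℕ, (Finset.univ.filter fun i : Fin e => j + 1 ≤ r' i).card =
      S7.ell e rr j := by
    intro j
    unfold S7.ell
    rw [Finset.card_filter, Finset.sum_range]
    refine Finset.sum_congr rfl fun i _ => ?_
    rw [hrr]
    rfl
  have hle : rr 0 ≤ r := by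
    rw [← hrrsum]
    exact Finset.single_le_sum (f := rr) (fun i _ => Nat.zero_le _) (Finset.mem_range.2 he)
  obtain ⟨k, hk⟩ := Nat.exists_eq_add_of_le hle
  have hel : S7.ElDiv (ι π) ϖ (S7.ell e rr) (rr 0) ↔ S7.ElDiv (ι π) ϖ (S7.ell e rr) r := by
    constructor
    · intro h
      have := S7.ElDiv.extend (k := k) hell h
      rwa [← hk] at this
    · intro h
      rw [hk] at h
      exact S7.ElDiv.drop hell h
  rw [hel]
  have hvϖ : ∀ n : ℕ, v ((ϖ ^ n : A) : K) = (n : ℝ) / e := by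
    intro n
    have : ((ϖ ^ n : A) : K) = (ϖ : K) ^ n := by push_cast; rfl
    rw [this, hvpow _ hϖK, hϖv]
    ring
  constructor
  · rintro ⟨c, hc0, hΨ, hcv⟩
    refine (S7.eldiv_iff c ?_).2 hΨ
    intro j α
    have hcv' := hcv j
    rw [hcard] at hcv'
    have := hassoc (c j) (ϖ ^ S7.ell e rr j) (hc0 j) (pow_ne_zero _ hϖ0)
      (hcv'.trans (hvϖ _).symm)
    exact this.dvd_iff_dvd_left
  · intro h
    refine ⟨fun j => ϖ ^ S7.ell e rr j, fun j => pow_ne_zero _ hϖ0, ?_, ?_⟩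
    · exact (S7.eldiv_iff (l := S7.ell e rr) (fun j : Fin r => ϖ ^ S7.ell e rr j)
        (fun j α => Iff.rfl)).1 h
    · intro j
      rw [hcard]
      exact hvϖ _
end
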